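/- arXiv:2001.08079 — 2 statements merged into one kernel-verified Lean document; each statement's English description precedes it below -/
import Mathlib

section
/- Let n and r be positive integers with n ≡ 3 (mod 4). Then, modulo Φ_{n^{2r}}(q)^2 · ∏_{j=1}^{r} Φ_{n^{2j-1}}(q)^2, the sum over k from 0 to (n^{2r}-1)/2 of (1+q^{4k+1})(q^2;q^4)_k^3 / ((1+q)(q^4;q^4)_k^3) · q^k is congruent to [n^{2r}]_{q^2} · (q^3;q^4)_{(n^{2r}-1)/2} / (q^5;q^4)_{(n^{2r}-1)/2} · q^{(1-n^{2r})/2}. -/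
open Polynomial Finset

/-- The variable `q` as an element of the field of rational functions `ℚ(q)`. -/
noncomputable def Q : RatFunc ℚ := RatFunc.X

/-- The q-shifted factorial `(a;b)_k = (1-a)(1-ab)⋯(1-ab^{k-1})` in `ℚ(q)`. -/
noncomputable def qPoch (a b : RatFunc ℚ) (k : ℕ) : RatFunc ℚ :=
  ∏ i ∈ Finset.range k, (1 - a * b ^ i)

/-!
Replace two of the three factors `(q²; q⁴)_k / (q⁴; q⁴)_k` of the summand by their deformations by
`x` and by `1/x`. At `x = q^(4m'+2)` with `m' ≤ m = (N - 1) / 2` the deformed sum is a terminating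
very-well-poised `₆φ₅`, which Rogers' formula evaluates to `V(m')`, where `V(m)` is the value
claimed for `x = 1`. Multiplied by its common denominator, and with `V(m)` subtracted, the deformed
sum becomes a polynomial `T` in `u = x + 1/x`.

Let `D` divide `N`. The points `x = 1` and `x = q^(4m'+2)` with `D ∣ 2m' + 1` have values of `u`
any two of which differ by `Φ_D(q)²` times a `Φ_D(q)`-adic unit, and at each of them the common
denominator is `Φ_D(q)^(2⌊m/D⌋)` times a unit. Exactly `⌊m/D⌋ + 1` of these `m'` are at most `m`,
and for them `V(m') ≡ V(m)` modulo `Φ_D(q)²`: if `D = N` then `m' = m`, and if `D ≡ 3 (mod 4)` then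
both sides vanish, because `(q³; q⁴)_{m'}` has one factor `Φ_D(q)` more than `(q⁵; q⁴)_{m'}`. Hence
`Φ_D(q)^(2⌊m/D⌋+2)` divides `T` at all these points, and by divided differences also at `x = 1`,
where cancelling the denominator leaves the congruence modulo `Φ_D(q)²`.
-/

section HypergeometricSum

variable {K : Type*} [Field K] {p a b c d : K}

/-- The `q`-shifted factorial `(a; p)_k` over an arbitrary field; `qPoch` is the case of `ℚ(q)`. -/
def qPochhammer (a p : K) (k : ℕ) : K :=
  ∏ i ∈ range k, (1 - a * p ^ i)

@[simp]
theorem qPochhammer_zero (a p : K) : qPochhammer a p 0 = 1 :=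
  prod_range_zero _

theorem qPochhammer_succ (a p : K) (k : ℕ) :
    qPochhammer a p (k + 1) = qPochhammer a p k * (1 - a * p ^ k) :=
  prod_range_succ _ _

theorem qPochhammer_succ' (a p : K) (k : ℕ) :
    qPochhammer a p (k + 1) = (1 - a) * qPochhammer (a * p) p k := by
  simp only [qPochhammer, prod_range_succ', pow_zero, mul_one, pow_succ', mul_assoc, mul_comm]

theorem qPochhammer_ne_zero (h : ∀ i, a * p ^ i ≠ 1) (k : ℕ) : qPochhammer a p k ≠ 0 :=
  prod_ne_zero_iff.2 fun i _ => sub_ne_zero.2 (h i).symm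

theorem qPochhammer_div_ne_zero (hb0 : b ≠ 0) (h : ∀ i, a * p ^ (i + 1) ≠ b) (k : ℕ) :
    qPochhammer (a * p / b) p k ≠ 0 :=
  qPochhammer_ne_zero (fun i hi => h i (by rw [← (div_eq_one_iff_eq hb0), ← hi]; ring)) k

/-- The `k`-th term of the very-well-poised series `₆φ₅` in base `p` with parameters
`a, b, c, d` and argument `ap/(bcd)`. -/
def sixPhiFiveTerm (p a b c d : K) (k : ℕ) : K :=
  (1 - a * p ^ (2 * k)) / (1 - a) *
    ((qPochhammer a p k * qPochhammer b p k * qPochhammer c p k * qPochhammer d p k) /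
      (qPochhammer p p k * qPochhammer (a * p / b) p k * qPochhammer (a * p / c) p k *
        qPochhammer (a * p / d) p k)) * (a * p / (b * c * d)) ^ k

theorem sixPhiFiveTerm_zero (ha : a ≠ 1) (b c d : K) : sixPhiFiveTerm p a b c d 0 = 1 := by
  simp [sixPhiFiveTerm, div_self (sub_ne_zero.2 ha.symm)]

/-- The partial sums of the contiguous relation between the `₆φ₅` series with parameters `d / p`
and `d`; they vanish as soon as `(d; p)_j` does. -/
def sixPhiFiveAntidifference (p a b c d : K) (j : ℕ) : K :=
  a * p * d * (1 - b) * (1 - c) / ((d * b - a * p) * (d * c - a * p)) *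
    ((qPochhammer (a * p) p j * qPochhammer (b * p) p j * qPochhammer (c * p) p j *
        qPochhammer d p j) /
      (qPochhammer p p j * qPochhammer (a * p / b) p j * qPochhammer (a * p / c) p j *
        qPochhammer (a * p * p / d) p j)) * (a * p / (b * c * d)) ^ j

theorem sixPhiFiveAntidifference_add (hp0 : p ≠ 0) (hb0 : b ≠ 0) (hc0 : c ≠ 0) (hd0 : d ≠ 0)
    (ha : a ≠ 1) (hp : ∀ i, p ^ (i + 1) ≠ 1) (hb : ∀ i, a * p ^ (i + 1) ≠ b)
    (hc : ∀ i, a * p ^ (i + 1) ≠ c) (hd : ∀ i, a * p ^ (i + 1) ≠ d)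
    (hbd : d * b - a * p ≠ 0) (hcd : d * c - a * p ≠ 0) (j : ℕ) :
    sixPhiFiveAntidifference p a b c d j +
        (sixPhiFiveTerm p a b c (d / p) (j + 1) -
          (1 - a * p / d) * (1 - a * p / (b * c * d)) /
            ((1 - a * p / (d * b)) * (1 - a * p / (d * c))) * sixPhiFiveTerm p a b c d (j + 1)) =
      sixPhiFiveAntidifference p a b c d (j + 1) := by
  have ha_sub : 1 - a ≠ 0 := sub_ne_zero.2 ha.symm
  have hd_sub : d - a * p ≠ 0 := sub_ne_zero.2 fun h => hd 0 (by rw [h]; ring)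
  have hpj : 1 - p * p ^ j ≠ 0 := sub_ne_zero.2 fun h => hp j (by rw [h]; ring)
  have hbj : b - a * p * p ^ j ≠ 0 := sub_ne_zero.2 fun h => hb j (by rw [h]; ring)
  have hcj : c - a * p * p ^ j ≠ 0 := sub_ne_zero.2 fun h => hc j (by rw [h]; ring)
  have hdj : d - a * p ^ 2 * p ^ j ≠ 0 := sub_ne_zero.2 fun h => hd (j + 1) (by rw [h]; ring)
  have hPp := qPochhammer_ne_zero (a := p) (fun i h => hp i (by rw [← h, pow_succ'])) j
  have hPb := qPochhammer_div_ne_zero hb0 hb j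
  have hPc := qPochhammer_div_ne_zero hc0 hc j
  have hPd := qPochhammer_div_ne_zero (a := a * p) (p := p) hd0
    (fun i h => hd (i + 1) (by rw [← h]; ring)) j
  have hx : p ^ j ≠ 0 := pow_ne_zero j hp0
  have hz : a * p / (b * c * (d / p)) = a * p / (b * c * d) * p := by field_simp
  have hdp : a * p / (d / p) = a * p * p / d := by field_simp
  simp only [sixPhiFiveTerm, sixPhiFiveAntidifference, hz, hdp, mul_pow _ p, qPochhammer_succ' a,
    qPochhammer_succ' b, qPochhammer_succ' c, qPochhammer_succ' (d / p), div_mul_cancel₀ _ hp0,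
    qPochhammer_succ' (a * p / d), div_mul_eq_mul_div (a * p) d p, qPochhammer_succ _ _ j,
    pow_succ _ j, mul_comm 2 (j + 1), pow_mul]
  generalize p ^ j = x at *
  generalize (a * p / (b * c * d)) ^ j = z
  generalize qPochhammer p p j = Pp at *
  generalize qPochhammer (a * p / b) p j = Pb at *
  generalize qPochhammer (a * p / c) p j = Pc at *
  generalize qPochhammer (a * p * p / d) p j = Pd at *
  field_simp
  ring

theorem sum_sixPhiFiveTerm_div_sub (hp0 : p ≠ 0) (hb0 : b ≠ 0) (hc0 : c ≠ 0) (hd0 : d ≠ 0)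
    (ha : a ≠ 1) (hp : ∀ i, p ^ (i + 1) ≠ 1) (hb : ∀ i, a * p ^ (i + 1) ≠ b)
    (hc : ∀ i, a * p ^ (i + 1) ≠ c) (hd : ∀ i, a * p ^ (i + 1) ≠ d)
    (hbd : d * b - a * p ≠ 0) (hcd : d * c - a * p ≠ 0) (j : ℕ) :
    ∑ k ∈ range (j + 1), (sixPhiFiveTerm p a b c (d / p) k -
        (1 - a * p / d) * (1 - a * p / (b * c * d)) /
          ((1 - a * p / (d * b)) * (1 - a * p / (d * c))) * sixPhiFiveTerm p a b c d k) =
      sixPhiFiveAntidifference p a b c d j := by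
  induction j with
  | zero =>
    simp only [zero_add, sum_range_one, sixPhiFiveTerm_zero ha, sixPhiFiveAntidifference,
      qPochhammer_zero, pow_zero]
    field_simp
    ring
  | succ j ih =>
    rw [sum_range_succ, ih, sixPhiFiveAntidifference_add hp0 hb0 hc0 hd0 ha hp hb hc hd hbd hcd]

/-- Rogers' summation of the terminating very-well-poised `₆φ₅`. -/
theorem sum_sixPhiFiveTerm_inv_pow (hp0 : p ≠ 0) (hb0 : b ≠ 0) (hc0 : c ≠ 0)
    (hp : ∀ i, p ^ (i + 1) ≠ 1) (ha : ∀ i, a * p ^ i ≠ 1) (hb : ∀ i, a * p ^ (i + 1) ≠ b)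
    (hc : ∀ i, a * p ^ (i + 1) ≠ c) {n N : ℕ} (hnN : n ≤ N) :
    ∑ k ∈ range (N + 1), sixPhiFiveTerm p a b c (p ^ n)⁻¹ k =
      qPochhammer (a * p) p n * qPochhammer (a * p / (b * c)) p n /
        (qPochhammer (a * p / b) p n * qPochhammer (a * p / c) p n) := by
  have ha1 : a ≠ 1 := by simpa using ha 0
  induction n with
  | zero =>
    rw [sum_range_succ', sum_eq_zero, zero_add, sixPhiFiveTerm_zero ha1]
    · simp
    · intro k _
      simp [sixPhiFiveTerm, qPochhammer_succ']
  | succ n ih =>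
    have hpn : p ^ n ≠ 0 := pow_ne_zero n hp0
    have hsum := sum_sixPhiFiveTerm_div_sub (d := (p ^ n)⁻¹) hp0 hb0 hc0 (inv_ne_zero hpn) ha1 hp hb
      hc (fun i h => ha (i + 1 + n) (by rw [pow_add, ← mul_assoc, h, inv_mul_cancel₀ hpn]))
      (sub_ne_zero.2 fun h => hb n (by rw [pow_succ', ← mul_assoc, ← h]; field_simp))
      (sub_ne_zero.2 fun h => hc n (by rw [pow_succ', ← mul_assoc, ← h]; field_simp)) N
    have hterm : qPochhammer (p ^ n)⁻¹ p N = 0 :=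
      prod_eq_zero (mem_range.2 hnN) (by rw [inv_mul_cancel₀ hpn, sub_self])
    rw [sum_sub_distrib, ← mul_sum, ih (by omega), sixPhiFiveAntidifference, hterm] at hsum
    simp only [mul_zero, zero_mul, zero_div, sub_eq_zero] at hsum
    rw [pow_succ, mul_inv, ← div_eq_mul_inv, hsum]
    simp only [qPochhammer_succ]
    simp only [div_eq_mul_inv, mul_inv, inv_inv]
    ring

theorem qPochhammer_div_qPochhammer_reflect (hp0 : p ≠ 0) (ha0 : a ≠ 0) (hb0 : b ≠ 0) (m : ℕ) :
    qPochhammer (p / (a * p ^ m)) p m / qPochhammer (p / (b * p ^ m)) p m =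
      (b / a) ^ m * (qPochhammer a p m / qPochhammer b p m) := by
  have hfactor : ∀ c ≠ 0, ∀ j ∈ range m,
      1 - p / (c * p ^ m) * p ^ (m - 1 - j) = (1 - c * p ^ j) / -(c * p ^ j) := by
    intro c hc0 j hj
    have hpow : p ^ m = p * p ^ (m - 1 - j) * p ^ j := by
      rw [← pow_succ', ← pow_add]
      congr 1
      have := mem_range.1 hj
      omega
    have hpj := pow_ne_zero j hp0
    have hpi := pow_ne_zero (m - 1 - j) hp0
    rw [hpow]
    field_simp
    ring
  simp only [qPochhammer, ← prod_div_distrib]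
  rw [← prod_range_reflect,
    show (b / a) ^ m = ∏ _j ∈ range m, b / a by rw [prod_const, card_range], ← prod_mul_distrib]
  refine prod_congr rfl fun j hj => ?_
  have hpj := pow_ne_zero j hp0
  rw [hfactor a ha0 j hj, hfactor b hb0 j hj, div_div_div_comm, neg_div_neg_eq,
    mul_div_mul_right _ _ hpj, div_div_eq_mul_div, mul_comm, div_mul_eq_mul_div, mul_div_assoc]

end HypergeometricSum

section WellPoisedSum

variable {K : Type*} [Field K] {q x : K}

/-- The factor of the `k`-th term of the sum to be evaluated that is kept by the deformation
`wellPoisedTerm`. -/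
def wellPoisedCoeff (q : K) (k : ℕ) : K :=
  (1 + q ^ (4 * k + 1)) / (1 + q) *
    (qPochhammer (q ^ 2) (q ^ 4) k / qPochhammer (q ^ 4) (q ^ 4) k) * q ^ k

/-- The `k`-th term of the sum to be evaluated, deformed by a parameter `x`: the last two of the
three factors `(q²; q⁴)_k / (q⁴; q⁴)_k` are replaced by `(q²x; q⁴)_k / (q⁴x; q⁴)_k` and
`(q²/x; q⁴)_k / (q⁴/x; q⁴)_k`. -/
def wellPoisedTerm (q x : K) (k : ℕ) : K :=
  wellPoisedCoeff q k *
    ((qPochhammer (q ^ 2 * x) (q ^ 4) k * qPochhammer (q ^ 2 / x) (q ^ 4) k) /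
      (qPochhammer (q ^ 4 * x) (q ^ 4) k * qPochhammer (q ^ 4 / x) (q ^ 4) k))

/-- The closed form `[2m+1]_{q²} (q³; q⁴)_m / (q⁵; q⁴)_m · q^{-m}` of the well-poised sum. -/
def wellPoisedValue (q : K) (m : ℕ) : K :=
  (∑ i ∈ range (2 * m + 1), q ^ (2 * i)) * qPochhammer (q ^ 3) (q ^ 4) m /
    qPochhammer (q ^ 5) (q ^ 4) m * (q ^ m)⁻¹

theorem wellPoisedTerm_one (q : K) (k : ℕ) :
    wellPoisedTerm q 1 k = (1 + q ^ (4 * k + 1)) * qPochhammer (q ^ 2) (q ^ 4) k ^ 3 * q ^ k /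
      ((1 + q) * qPochhammer (q ^ 4) (q ^ 4) k ^ 3) := by
  rw [wellPoisedTerm, wellPoisedCoeff, mul_one, mul_one, div_one, div_one]
  simp only [div_eq_mul_inv, mul_inv]
  ring

theorem ne_zero_of_injective_pow (hq : Function.Injective (q ^ · : ℕ → K)) : q ≠ 0 := by
  rintro rfl
  exact absurd (@hq 1 2 (by simp)) (by norm_num)

theorem pow_ne_one_of_injective_pow (hq : Function.Injective (q ^ · : ℕ → K)) {n : ℕ}
    (hn : n ≠ 0) : q ^ n ≠ 1 := fun h =>
  hn (hq (h.trans (pow_zero q).symm))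

theorem wellPoisedTerm_eq_sixPhiFiveTerm (hq : Function.Injective (q ^ · : ℕ → K)) (hx : x ≠ 0)
    (k : ℕ) :
    wellPoisedTerm q x k = sixPhiFiveTerm (q ^ 4) (q ^ 2) q (q ^ 2 * x) (q ^ 2 / x) k := by
  have hq0 := ne_zero_of_injective_pow hq
  have hone_sub : 1 - q ≠ 0 := sub_ne_zero.2 (by
    simpa using (pow_ne_one_of_injective_pow hq one_ne_zero).symm)
  have hone_sub_pow : 1 - q * (q ^ 4) ^ k ≠ 0 := sub_ne_zero.2 (by
    simpa [← pow_mul, ← pow_succ'] using (pow_ne_one_of_injective_pow hq (4 * k).succ_ne_zero).symm)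
  have hb : q ^ 2 * q ^ 4 / q = q * q ^ 4 := by field_simp
  have hc : q ^ 2 * q ^ 4 / (q ^ 2 * x) = q ^ 4 / x := by field_simp
  have hd : q ^ 2 * q ^ 4 / (q ^ 2 / x) = q ^ 4 * x := by field_simp
  have hz : q ^ 2 * q ^ 4 / (q * (q ^ 2 * x) * (q ^ 2 / x)) = q := by field_simp
  have hshift : qPochhammer (q * q ^ 4) (q ^ 4) k =
      qPochhammer q (q ^ 4) k * (1 - q * (q ^ 4) ^ k) / (1 - q) := by
    rw [eq_div_iff hone_sub, mul_comm, ← qPochhammer_succ', qPochhammer_succ]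
  have hfactor : (1 - q ^ 2 * (q ^ 4) ^ (2 * k)) / (1 - q ^ 2) =
      (1 - q * (q ^ 4) ^ k) / (1 - q) * ((1 + q ^ (4 * k + 1)) / (1 + q)) := by
    rw [div_mul_div_comm]
    congr 1 <;> ring
  have hP : qPochhammer q (q ^ 4) k ≠ 0 := qPochhammer_ne_zero (fun i => by
    rw [← pow_mul, ← pow_succ']
    exact pow_ne_one_of_injective_pow hq (Nat.succ_ne_zero _)) k
  rw [sixPhiFiveTerm, wellPoisedTerm, wellPoisedCoeff, hb, hc, hd, hz, hshift, hfactor]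
  field_simp

theorem sum_pow_mul_qPochhammer (hq : q ^ 2 ≠ 1) (m : ℕ) :
    (∑ i ∈ range (2 * m + 1), q ^ (2 * i)) * qPochhammer (q ^ 2) (q ^ 4) m =
      qPochhammer (q ^ 2 * q ^ 4) (q ^ 4) m := by
  have hq_sub : 1 - q ^ 2 ≠ 0 := sub_ne_zero.2 hq.symm
  simp only [pow_mul]
  rw [geom_sum_eq hq, ← neg_div_neg_eq, neg_sub, neg_sub, div_mul_eq_mul_div, div_eq_iff hq_sub,
    mul_comm _ (1 - q ^ 2), ← qPochhammer_succ', qPochhammer_succ]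
  ring

theorem sum_wellPoisedTerm (hq : Function.Injective (q ^ · : ℕ → K)) {m N : ℕ} (hmN : m ≤ N) :
    ∑ k ∈ range (N + 1), wellPoisedTerm q (q ^ (4 * m + 2)) k = wellPoisedValue q m := by
  have hq0 := ne_zero_of_injective_pow hq
  have hd : q ^ 2 / q ^ (4 * m + 2) = ((q ^ 4) ^ m)⁻¹ := by
    rw [← pow_mul, pow_add]
    field_simp
  have hpow_ne : ∀ i j, 4 * i + 6 ≠ j → q ^ 2 * (q ^ 4) ^ (i + 1) ≠ q ^ j := fun i j hij h =>
    hij (hq (show q ^ (4 * i + 6) = q ^ j by rw [← h]; ring))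
  have hb : ∀ i, q ^ 2 * (q ^ 4) ^ (i + 1) ≠ q := fun i => by
    simpa using hpow_ne i 1 (by omega)
  have hc : ∀ i, q ^ 2 * (q ^ 4) ^ (i + 1) ≠ q ^ 2 * q ^ (4 * m + 2) := fun i => by
    rw [← pow_add]
    exact hpow_ne i _ (by omega)
  have hP : qPochhammer (q ^ 2) (q ^ 4) m ≠ 0 := qPochhammer_ne_zero (fun i => by
    rw [← pow_mul, ← pow_add]
    exact pow_ne_one_of_injective_pow hq (by omega)) m
  have hreflect := qPochhammer_div_qPochhammer_reflect (pow_ne_zero 4 hq0) (pow_ne_zero 3 hq0)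
    (pow_ne_zero 2 hq0) m
  rw [show q ^ 2 / q ^ 3 = q⁻¹ by field_simp, inv_pow] at hreflect
  simp only [wellPoisedTerm_eq_sixPhiFiveTerm hq (pow_ne_zero (4 * m + 2) hq0), hd]
  rw [sum_sixPhiFiveTerm_inv_pow (pow_ne_zero 4 hq0) hq0 (by positivity)
    (fun i => by rw [← pow_mul]; exact pow_ne_one_of_injective_pow hq (by omega))
    (fun i => by rw [← pow_mul, ← pow_add]; exact pow_ne_one_of_injective_pow hq (by omega))
    hb hc hmN,
    show q ^ 2 * q ^ 4 / (q * (q ^ 2 * q ^ (4 * m + 2))) = q ^ 4 / (q ^ 3 * (q ^ 4) ^ m) by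
      rw [← pow_mul]; field_simp; ring,
    show q ^ 2 * q ^ 4 / q = q ^ 5 by field_simp,
    show q ^ 2 * q ^ 4 / (q ^ 2 * q ^ (4 * m + 2)) = q ^ 4 / (q ^ 2 * (q ^ 4) ^ m) by
      rw [← pow_mul]; field_simp; ring,
    ← sum_pow_mul_qPochhammer (pow_ne_one_of_injective_pow hq two_ne_zero),
    mul_div_mul_comm, hreflect, wellPoisedValue]
  field_simp

theorem qPochhammer_mul_mul_qPochhammer_div (b p : K) (hx : x ≠ 0) (k : ℕ) :
    qPochhammer (b * x) p k * qPochhammer (b / x) p k =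
      ∏ i ∈ range k, (1 + (b * p ^ i) ^ 2 - b * p ^ i * (x + x⁻¹)) := by
  rw [qPochhammer, qPochhammer, ← prod_mul_distrib]
  refine prod_congr rfl fun i _ => ?_
  field_simp
  ring

end WellPoisedSum

section Interpolation

variable {K R Γ : Type*} [Field K] [CommRing R] [Algebra R K] [LinearOrderedCommGroupWithZero Γ]

theorem valuation_eval_le_pow {v : Valuation K Γ} (hR : ∀ x : R, v (algebraMap R K x) ≤ 1) {ρ : Γ}
    (hρ : ρ ≠ 0) {u : ℕ → R} {z : R} (hu : ∀ i j, i ≠ j → v (algebraMap R K (u i - u j)) = ρ)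
    (hz : ∀ i, v (algebraMap R K (z - u i)) = ρ) (s : ℕ) (T : R[X])
    (hT : ∀ i < s, v (algebraMap R K (T.eval (u i))) ≤ ρ ^ s) :
    v (algebraMap R K (T.eval z)) ≤ ρ ^ s := by
  induction s generalizing T with
  | zero => simpa only [pow_zero] using hR (T.eval z)
  | succ s ih =>
    obtain ⟨T', hT'⟩ := X_sub_C_dvd_sub_C_eval (a := u s) (p := T)
    have heval : ∀ w, T.eval w - T.eval (u s) = (w - u s) * T'.eval w := fun w => by
      simpa using congrArg (eval w) hT'
    have hT'z : v (algebraMap R K (T'.eval z)) ≤ ρ ^ s := by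
      refine ih T' fun i hi => ?_
      have hmul : v (algebraMap R K ((u i - u s) * T'.eval (u i))) ≤ ρ ^ (s + 1) := by
        rw [← heval, map_sub]
        exact v.map_sub_le (hT i (by omega)) (hT s (by omega))
      rw [map_mul, map_mul, hu i s hi.ne, pow_succ'] at hmul
      exact (mul_le_mul_iff_right₀ (zero_lt_iff.2 hρ)).1 hmul
    rw [← sub_add_cancel (T.eval z) (T.eval (u s)), heval, map_add, map_mul]
    refine v.map_add_le ?_ (hT s (by omega))
    rw [map_mul, hz, pow_succ']
    gcongr

theorem exists_eval_eq_prod_mul_sum (c : ℕ → R) (A B : ℕ → R[X]) (n : ℕ) :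
    ∃ T : R[X], ∀ w : R, ∏ i ∈ range n, algebraMap R K ((B i).eval w) ≠ 0 →
      algebraMap R K (T.eval w) = (∏ i ∈ range n, algebraMap R K ((B i).eval w)) *
        ∑ k ∈ range (n + 1), algebraMap R K (c k) *
          ((∏ i ∈ range k, algebraMap R K ((A i).eval w)) /
            ∏ i ∈ range k, algebraMap R K ((B i).eval w)) := by
  refine ⟨∑ k ∈ range (n + 1), C (c k) * (∏ i ∈ range k, A i) * ∏ i ∈ Ico k n, B i,
    fun w hw => ?_⟩
  simp only [eval_finsetSum, eval_mul, eval_C, eval_prod, map_sum, map_mul, map_prod, mul_sum]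
  refine sum_congr rfl fun k hk => ?_
  rw [← prod_range_mul_prod_Ico _ (mem_range_succ_iff.1 hk)] at hw ⊢
  have hBk := left_ne_zero_of_mul hw
  field_simp

theorem exists_eval_eq_sum_wellPoisedTerm_sub {q : R} {c : ℕ → R}
    (hc : ∀ k, algebraMap R K (c k) = wellPoisedCoeff (algebraMap R K q) k) (e : R) (m : ℕ) :
    ∃ T : R[X], ∀ (w : R) (x : K), x ≠ 0 → algebraMap R K w = x + x⁻¹ →
      ∀ P, P = qPochhammer (algebraMap R K q ^ 4 * x) (algebraMap R K q ^ 4) m *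
          qPochhammer (algebraMap R K q ^ 4 / x) (algebraMap R K q ^ 4) m → P ≠ 0 →
        algebraMap R K (T.eval w) =
          P * (∑ k ∈ range (m + 1), wellPoisedTerm (algebraMap R K q) x k - algebraMap R K e) := by
  let F : ℕ → ℕ → R[X] := fun b i =>
    C (1 + (q ^ b * (q ^ 4) ^ i) ^ 2) - C (q ^ b * (q ^ 4) ^ i) * X
  obtain ⟨T, hT⟩ := exists_eval_eq_prod_mul_sum (K := K) c (F 2) (F 4) m
  refine ⟨T - C e * ∏ i ∈ range m, F 4 i, fun w x hx hw P hP hP0 => ?_⟩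
  have hF : ∀ b k, ∏ i ∈ range k, algebraMap R K ((F b i).eval w) =
      qPochhammer (algebraMap R K q ^ b * x) (algebraMap R K q ^ 4) k *
        qPochhammer (algebraMap R K q ^ b / x) (algebraMap R K q ^ 4) k := fun b k => by
    simp [F, qPochhammer_mul_mul_qPochhammer_div _ _ hx, hw]
  rw [hP] at hP0 ⊢
  rw [eval_sub, map_sub, hT w (by rwa [hF]), eval_mul, eval_C, eval_prod, map_mul, map_prod]
  simp only [hF, hc, wellPoisedTerm]
  ring

end Interpolation

section CyclotomicValues

theorem mod_eq_half_of_dvd_two_mul_add_one {d m : ℕ} (h : d ∣ 2 * m + 1) : m % d = d / 2 := by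
  obtain ⟨e, he⟩ := h
  obtain ⟨⟨f, rfl⟩, ⟨g, rfl⟩⟩ := Nat.odd_mul.1 (he ▸ odd_two_mul_add_one m)
  rw [show m = f + (2 * f + 1) * g by linarith, Nat.add_mul_mod_self_left,
    Nat.mod_eq_of_lt (by omega)]
  omega

variable {K Γ : Type*} [Field K] [LinearOrderedCommGroupWithZero Γ]

/-- The values that `q` and the differences `1 - qⁿ` take under the valuation of the prime
`Φ_D(q)`; here `ϖ` is the value of `Φ_D(q)` itself. -/
structure HasCyclotomicValues (v : Valuation K Γ) (q : K) (D : ℕ) (ϖ : Γ) : Prop where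
  value_ne_zero : ϖ ≠ 0
  map_base : v q = 1
  map_one_sub_pow : ∀ n, n ≠ 0 → v (1 - q ^ n) = if D ∣ n then ϖ else 1

namespace HasCyclotomicValues

variable {v : Valuation K Γ} {q : K} {D : ℕ} {ϖ : Γ}

theorem base_ne_zero (hv : HasCyclotomicValues v q D ϖ) : q ≠ 0 :=
  v.ne_zero_iff.1 (by rw [hv.map_base]; exact one_ne_zero)

theorem injective_pow (hv : HasCyclotomicValues v q D ϖ) :
    Function.Injective (q ^ · : ℕ → K) := by
  have hpow_ne_one : ∀ n, n ≠ 0 → q ^ n ≠ 1 := fun n hn h => by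
    have := hv.map_one_sub_pow n hn
    rw [h, sub_self, map_zero] at this
    split_ifs at this
    exacts [hv.value_ne_zero this.symm, zero_ne_one this]
  intro a b hab
  wlog h : a < b generalizing a b
  · by_contra hne
    exact hne (this hab.symm (by omega)).symm
  have : q ^ a * q ^ (b - a) = q ^ a := by rw [← pow_add, Nat.add_sub_cancel' h.le]; exact hab.symm
  exact absurd (mul_eq_left₀ (pow_ne_zero a hv.base_ne_zero) |>.1 this)
    (hpow_ne_one (b - a) (by omega))

theorem value_le_one (hv : HasCyclotomicValues v q D ϖ) (hD : D ≠ 0) : ϖ ≤ 1 := by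
  have h := hv.map_one_sub_pow D hD
  rw [if_pos dvd_rfl] at h
  rw [← h]
  exact v.map_sub_le v.map_one.le (by rw [map_pow, hv.map_base, one_pow])

theorem map_one_sub_zpow (hv : HasCyclotomicValues v q D ϖ) {n : ℤ} (hn : n ≠ 0) :
    v (1 - q ^ n) = if (D : ℤ) ∣ n then ϖ else 1 := by
  obtain ⟨n, rfl | rfl⟩ := n.eq_nat_or_neg
  · simpa [Int.natCast_dvd_natCast] using hv.map_one_sub_pow n (by simpa using hn)
  · have hq : (1 - q ^ (-n : ℤ)) = -(1 - q ^ n) * (q ^ n)⁻¹ := by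
      have := pow_ne_zero n hv.base_ne_zero
      rw [zpow_neg, zpow_natCast]
      field_simp
      ring
    rw [hq, map_mul, Valuation.map_neg, map_inv₀, map_pow, hv.map_base, one_pow, inv_one, mul_one,
      hv.map_one_sub_pow n (by simpa using hn)]
    simp only [Int.dvd_neg, Int.natCast_dvd_natCast]

theorem map_zpow_add_zpow_neg_sub (hv : HasCyclotomicValues v q D ϖ) {a b : ℤ}
    (ha : (D : ℤ) ∣ a) (hb : (D : ℤ) ∣ b) (hne : a ≠ b) (hne' : a + b ≠ 0) :
    v (q ^ a + q ^ (-a) - (q ^ b + q ^ (-b))) = ϖ ^ 2 := by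
  have hq0 := hv.base_ne_zero
  have hfactor : q ^ a + q ^ (-a) - (q ^ b + q ^ (-b)) =
      q ^ a * (1 - q ^ (b - a)) * (1 - q ^ (-(a + b))) := by
    have := zpow_ne_zero a hq0
    have := zpow_ne_zero b hq0
    rw [zpow_sub₀ hq0, zpow_neg, zpow_neg, zpow_neg, zpow_add₀ hq0]
    field_simp
    ring
  rw [hfactor, map_mul, map_mul, map_zpow₀, hv.map_base, one_zpow, one_mul,
    hv.map_one_sub_zpow (sub_ne_zero.2 hne.symm), hv.map_one_sub_zpow (neg_ne_zero.2 hne'),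
    if_pos (dvd_sub hb ha), if_pos (dvd_neg.2 (dvd_add ha hb)), sq]

theorem map_qPochhammer (hv : HasCyclotomicValues v q D ϖ) (hD : Odd D) {a : ℤ} {s : ℕ}
    (hs : (D : ℤ) ∣ a + 4 * s) (ha : ∀ i : ℕ, a + 4 * i ≠ 0) (k : ℕ) :
    v (qPochhammer (q ^ a) (q ^ 4) k) = ϖ ^ (k / D + if s % D < k % D then 1 else 0) := by
  have hcop : IsCoprime (D : ℤ) 4 :=
    Nat.isCoprime_iff_coprime.2 (hD.coprime_two_right.pow_right 2)
  have hdvd : ∀ i : ℕ, (D : ℤ) ∣ a + 4 * i ↔ i ≡ s [MOD D] := fun i => by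
    rw [← Int.natCast_modEq_iff, Int.modEq_comm, Int.modEq_iff_dvd, ← dvd_sub_left hs,
      add_sub_add_left_eq_sub, ← mul_sub]
    exact ⟨hcop.dvd_of_dvd_mul_left, fun h => h.mul_left 4⟩
  have hfactor : ∀ i, v (1 - q ^ a * (q ^ 4) ^ i) = if i ≡ s [MOD D] then ϖ else 1 := fun i => by
    rw [← if_congr (hdvd i) rfl rfl, ← hv.map_one_sub_zpow (ha i), zpow_add₀ hv.base_ne_zero,
      zpow_mul, zpow_natCast]
    norm_cast
  rw [← Nat.count_modEq_card _ hD.pos, Nat.count_eq_card_filter_range, ← prod_const, prod_filter,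
    qPochhammer, map_prod]
  exact prod_congr rfl fun i _ => hfactor i

theorem map_one_add (hv : HasCyclotomicValues v q D ϖ) (hD : 2 < D) : v (1 + q) = 1 := by
  have hvalue_one : ∀ n, n ≠ 0 → n < D → v (1 - q ^ n) = 1 := fun n hn hnD => by
    rw [hv.map_one_sub_pow n hn, if_neg (Nat.not_dvd_of_pos_of_lt (by omega) hnD)]
  have hmul := hvalue_one 2 (by omega) hD
  rwa [show 1 - q ^ 2 = (1 - q ^ 1) * (1 + q) by ring, map_mul, hvalue_one 1 (by omega) (by omega),
    one_mul] at hmul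

theorem map_qPochhammer_four_add (hv : HasCyclotomicValues v q D ϖ) (hD : Odd D) {l : ℤ}
    (hl : (D : ℤ) ∣ l) (hl4 : l = 0 ∨ ¬ 4 ∣ l) (k : ℕ) :
    v (qPochhammer (q ^ (4 + l)) (q ^ 4) k) = ϖ ^ (k / D) := by
  have hs : (D : ℤ) ∣ 4 + l + 4 * (D - 1 : ℕ) := by
    rw [Nat.cast_sub hD.pos, Nat.cast_one, show 4 + l + 4 * ((D : ℤ) - 1) = l + 4 * D by ring]
    exact dvd_add hl (dvd_mul_left _ 4)
  have hmod : ¬ (D - 1) % D < k % D := by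
    have := Nat.mod_lt k hD.pos
    rw [Nat.mod_eq_of_lt (Nat.sub_one_lt hD.pos.ne')]
    omega
  rw [hv.map_qPochhammer hD hs (fun i => by omega), if_neg hmod, add_zero]

theorem map_qPochhammer_mul_qPochhammer_div (hv : HasCyclotomicValues v q D ϖ) (hD : Odd D)
    {l : ℤ} (hl : (D : ℤ) ∣ l) (hl4 : l = 0 ∨ ¬ 4 ∣ l) (k : ℕ) :
    v (qPochhammer (q ^ 4 * q ^ l) (q ^ 4) k * qPochhammer (q ^ 4 / q ^ l) (q ^ 4) k) =
      (ϖ ^ 2) ^ (k / D) := by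
  have hsub := zpow_sub₀ hv.base_ne_zero 4 l
  have hadd := zpow_add₀ hv.base_ne_zero 4 l
  norm_cast at hsub hadd
  rw [← hsub, ← hadd, map_mul, hv.map_qPochhammer_four_add hD hl hl4, sub_eq_add_neg,
    hv.map_qPochhammer_four_add hD (dvd_neg.2 hl) (by omega), ← pow_add, ← pow_mul, two_mul]

theorem map_wellPoisedCoeff_le_one (hv : HasCyclotomicValues v q D ϖ) (hD : Odd D) (hD2 : 2 < D)
    (k : ℕ) : v (wellPoisedCoeff q k) ≤ 1 := by
  have hodd := Nat.odd_iff.1 hD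
  have htwo := hv.map_qPochhammer hD (a := 2) (s := D / 2) ⟨2, by omega⟩ (fun i => by omega) k
  have hfour := hv.map_qPochhammer_four_add hD (dvd_zero _) (.inl rfl) k
  rw [zpow_ofNat] at htwo
  rw [add_zero, zpow_ofNat] at hfour
  have hadd : v (1 + q ^ (4 * k + 1)) ≤ 1 :=
    v.map_add_le v.map_one.le (by rw [map_pow, hv.map_base, one_pow])
  rw [wellPoisedCoeff, map_mul, map_mul, map_div₀, map_div₀, hv.map_one_add hD2, div_one, htwo,
    hfour, map_pow, hv.map_base, one_pow, mul_one, pow_add ϖ,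
    mul_div_cancel_left₀ _ (pow_ne_zero _ hv.value_ne_zero)]
  exact mul_le_one' hadd (pow_le_one' (hv.value_le_one hD.pos.ne') _)

theorem map_sum_pow (hv : HasCyclotomicValues v q D ϖ) (hD2 : 2 < D) {N : ℕ}
    (hN : N ≠ 0) (hDN : D ∣ N) : v (∑ i ∈ range N, q ^ (2 * i)) = ϖ := by
  have hgeom : (∑ i ∈ range N, q ^ (2 * i)) * (1 - q ^ 2) = 1 - q ^ (2 * N) := by
    simp only [pow_mul]
    exact geom_sum_mul_neg (q ^ 2) N
  have hvalue := congrArg v hgeom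
  rwa [map_mul, hv.map_one_sub_pow 2 two_ne_zero, hv.map_one_sub_pow _ (by omega),
    if_neg (Nat.not_dvd_of_pos_of_lt two_pos hD2), if_pos (hDN.mul_left 2), mul_one] at hvalue

theorem map_wellPoisedValue_of_mod_four_eq_three (hv : HasCyclotomicValues v q D ϖ)
    (hD : D % 4 = 3) {m : ℕ} (hm : D ∣ 2 * m + 1) : v (wellPoisedValue q m) = ϖ ^ 2 := by
  have hodd : Odd D := Nat.odd_iff.2 (by omega)
  have hthree := hv.map_qPochhammer hodd (a := 3) (s := (D - 3) / 4) ⟨1, by omega⟩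
    (fun i => by omega) m
  have hfive := hv.map_qPochhammer hodd (a := 5) (s := (3 * D - 5) / 4) ⟨3, by omega⟩
    (fun i => by omega) m
  have hmod := mod_eq_half_of_dvd_two_mul_add_one hm
  rw [zpow_ofNat, hmod, Nat.mod_eq_of_lt (by omega), if_pos (by omega)] at hthree
  rw [zpow_ofNat, hmod, Nat.mod_eq_of_lt (by omega), if_neg (by omega)] at hfive
  rw [wellPoisedValue, map_mul, map_div₀, map_mul, hv.map_sum_pow (by omega) (by omega) hm,
    hthree, hfive, map_inv₀, map_pow, hv.map_base, one_pow, inv_one, mul_one, add_zero, pow_succ,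
    mul_left_comm, mul_div_cancel_left₀ _ (pow_ne_zero _ hv.value_ne_zero), sq]

theorem map_wellPoisedValue_self_le_one {m : ℕ} (hv : HasCyclotomicValues v q (2 * m + 1) ϖ)
    (hm : m ≠ 0) : v (wellPoisedValue q m) ≤ 1 := by
  have hodd : Odd (2 * m + 1) := ⟨m, rfl⟩
  have hlt : m < 2 * m + 1 := by omega
  by_cases hmod : (2 * m + 1) % 4 = 3
  · rw [hv.map_wellPoisedValue_of_mod_four_eq_three hmod dvd_rfl]
    exact pow_le_one' (hv.value_le_one hodd.pos.ne') 2
  have hthree := hv.map_qPochhammer hodd (a := 3) (s := 3 * m / 2) ⟨3, by omega⟩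
    (fun i => by omega) m
  have hfive := hv.map_qPochhammer hodd (a := 5) (s := (m - 2) / 2) ⟨1, by omega⟩
    (fun i => by omega) m
  rw [zpow_ofNat, Nat.div_eq_of_lt hlt, Nat.mod_eq_of_lt hlt, Nat.mod_eq_of_lt (by omega),
    zero_add] at hthree hfive
  rw [if_neg (by omega), pow_zero] at hthree
  rw [if_pos (by omega), pow_one] at hfive
  rw [wellPoisedValue, map_mul, map_div₀, map_mul,
    hv.map_sum_pow (by omega) (by omega) dvd_rfl, hthree, hfive, map_inv₀, map_pow,
    hv.map_base, one_pow, inv_one, mul_one, mul_one, div_self hv.value_ne_zero]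

/-- The value `qˡ + q⁻ˡ` at `x = qˡ` of the variable `x + x⁻¹`, as an element of the valuation
ring. -/
def powAddInv (hv : HasCyclotomicValues v q D ϖ) (l : ℤ) : v.integer :=
  ⟨q ^ l + q ^ (-l), v.map_add_le (by rw [map_zpow₀, hv.map_base, one_zpow])
    (by rw [map_zpow₀, hv.map_base, one_zpow])⟩

theorem exists_map_eval_eq_mul_map_sum_wellPoisedTerm_sub (hv : HasCyclotomicValues v q D ϖ)
    (hD : Odd D) (hD2 : 2 < D) (m : ℕ) {c : K} (hc : v c ≤ 1) :
    ∃ T : v.integer[X], ∀ l : ℤ, (D : ℤ) ∣ l → (l = 0 ∨ ¬ 4 ∣ l) →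
      v (T.eval (hv.powAddInv l) : v.integer) =
        (ϖ ^ 2) ^ (m / D) * v (∑ k ∈ range (m + 1), wellPoisedTerm q (q ^ l) k - c) := by
  obtain ⟨T, hT⟩ := exists_eval_eq_sum_wellPoisedTerm_sub (K := K) (R := v.integer)
    (q := ⟨q, hv.map_base.le⟩)
    (c := fun k => ⟨wellPoisedCoeff q k, hv.map_wellPoisedCoeff_le_one hD hD2 k⟩)
    (fun _ => rfl) ⟨c, hc⟩ m
  refine ⟨T, fun l hl hl4 => ?_⟩
  have hP := hv.map_qPochhammer_mul_qPochhammer_div hD hl hl4 m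
  have hP0 := v.ne_zero_iff.1 (hP.trans_ne (pow_ne_zero _ (pow_ne_zero 2 hv.value_ne_zero)))
  rw [← hP, ← map_mul]
  exact congrArg v (hT (hv.powAddInv l) (q ^ l) (zpow_ne_zero l hv.base_ne_zero)
    (congrArg (q ^ l + ·) (zpow_neg q l)) _ rfl hP0)

theorem map_eval_powAddInv_zero_le (hv : HasCyclotomicValues v q D ϖ) (hD : D ≠ 0) (s : ℕ)
    (T : v.integer[X])
    (hT : ∀ t < s, v (T.eval (hv.powAddInv (D * (4 * t + 2))) : v.integer) ≤ (ϖ ^ 2) ^ s) :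
    v (T.eval (hv.powAddInv 0) : v.integer) ≤ (ϖ ^ 2) ^ s := by
  have hD0 : (D : ℤ) ≠ 0 := by exact_mod_cast hD
  have hdvd : ∀ t : ℕ, (D : ℤ) ∣ D * (4 * t + 2) := fun t => dvd_mul_right _ _
  have hne : ∀ t : ℕ, (D * (4 * t + 2) : ℤ) ≠ 0 := fun t => mul_ne_zero hD0 (by omega)
  refine valuation_eval_le_pow (v := v) (R := v.integer) (fun x => x.2)
    (pow_ne_zero 2 hv.value_ne_zero) (u := fun t => hv.powAddInv (D * (4 * t + 2)))
    (fun i j hij => hv.map_zpow_add_zpow_neg_sub (hdvd i) (hdvd j) (fun h => ?_) ?_)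
    (fun i => hv.map_zpow_add_zpow_neg_sub (dvd_zero _) (hdvd i) (hne i).symm ?_) s T hT
  · have := mul_left_cancel₀ hD0 h
    omega
  · rw [← mul_add]
    exact mul_ne_zero hD0 (by omega)
  · rw [zero_add]
    exact hne i

theorem map_sum_wellPoisedTerm_one_sub_le (hv : HasCyclotomicValues v q D ϖ) (hD2 : 2 < D)
    {m : ℕ} (hm : D ∣ 2 * m + 1) {c : K} (hc : v c ≤ 1)
    (hvalue : ∀ m' ≤ m, D ∣ 2 * m' + 1 → v (wellPoisedValue q m' - c) ≤ ϖ ^ 2) :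
    v (∑ k ∈ range (m + 1), wellPoisedTerm q 1 k - c) ≤ ϖ ^ 2 := by
  have hD : Odd D := .of_dvd_nat (odd_two_mul_add_one m) hm
  have hhalf : 2 * (D / 2) + 1 = D := Nat.two_mul_div_two_add_one_of_odd hD
  obtain ⟨T, hT⟩ := hv.exists_map_eval_eq_mul_map_sum_wellPoisedTerm_sub hD hD2 m hc
  have hnode : ∀ t < m / D + 1,
      v (T.eval (hv.powAddInv (D * (4 * t + 2))) : v.integer) ≤ (ϖ ^ 2) ^ (m / D + 1) := by
    intro t ht
    have hle : D / 2 + D * t ≤ m := by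
      rw [← mod_eq_half_of_dvd_two_mul_add_one hm]
      conv_rhs => rw [← Nat.mod_add_div m D]
      gcongr
      omega
    have hdvd : D ∣ 2 * (D / 2 + D * t) + 1 := ⟨2 * t + 1, by linarith⟩
    have hl : (D * (4 * t + 2) : ℤ) = (4 * (D / 2 + D * t) + 2 : ℕ) := by
      rw [show 4 * (D / 2 + D * t) + 2 = D * (4 * t + 2) by linarith]
      norm_cast
    rw [hT _ (dvd_mul_right _ _) (.inr (by omega)), hl, zpow_natCast,
      sum_wellPoisedTerm hv.injective_pow hle, pow_succ (ϖ ^ 2)]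
    exact mul_le_mul_right (hvalue _ hle hdvd) _
  have hroot := hv.map_eval_powAddInv_zero_le (by omega) (m / D + 1) T hnode
  rw [hT 0 (dvd_zero _) (.inl rfl), zpow_zero, pow_succ (ϖ ^ 2)] at hroot
  exact (mul_le_mul_iff_right₀
    (zero_lt_iff.2 (pow_ne_zero _ (pow_ne_zero 2 hv.value_ne_zero)))).1 hroot

theorem map_sum_wellPoisedTerm_one_sub_wellPoisedValue_le (hv : HasCyclotomicValues v q D ϖ)
    (hD2 : 2 < D) {m : ℕ} (hm : D ∣ 2 * m + 1) (hD : D = 2 * m + 1 ∨ D % 4 = 3) :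
    v (∑ k ∈ range (m + 1), wellPoisedTerm q 1 k - wellPoisedValue q m) ≤ ϖ ^ 2 := by
  obtain rfl | hmod := hD
  · refine hv.map_sum_wellPoisedTerm_one_sub_le hD2 hm
      (hv.map_wellPoisedValue_self_le_one (by omega)) fun m' hm' hdvd => ?_
    obtain rfl : m' = m := by
      have := Nat.le_of_dvd (by omega) hdvd
      omega
    rw [sub_self, map_zero]
    exact zero_le
  · have hvalue : ∀ m', D ∣ 2 * m' + 1 → v (wellPoisedValue q m') = ϖ ^ 2 := fun _ =>
      hv.map_wellPoisedValue_of_mod_four_eq_three hmod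
    refine hv.map_sum_wellPoisedTerm_one_sub_le hD2 hm
      ((hvalue m hm).trans_le (pow_le_one' (hv.value_le_one (by omega)) 2)) fun m' _ hdvd => ?_
    exact v.map_sub_le (hvalue m' hdvd).le (hvalue m hm).le

end HasCyclotomicValues

open IsDedekindDomain

theorem cyclotomic_rat_dvd_iff_aeval_eq_zero {D : ℕ} (hD : D ≠ 0) {ζ : ℂ} (hζ : IsPrimitiveRoot ζ D)
    (f : ℚ[X]) : cyclotomic D ℚ ∣ f ↔ aeval ζ f = 0 := by
  rw [cyclotomic_eq_minpoly_rat hζ (Nat.pos_of_ne_zero hD), minpoly.dvd_iff]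

theorem valuation_div_le_exp_neg_iff {R K : Type*} [CommRing R] [IsDedekindDomain R] [Field K]
    [Algebra R K] [IsFractionRing R K] (P : HeightOneSpectrum R) {a b : R} (hab : IsCoprime a b)
    (hb : b ≠ 0) (n : ℕ) :
    P.valuation K (algebraMap R K a / algebraMap R K b) ≤ WithZero.exp (-(n : ℤ)) ↔
      a ∈ P.asIdeal ^ n ∧ b ∉ P.asIdeal := by
  have hone := P.valuation_div_le_one_iff K a hb fun hbP haP =>
    Ideal.IsPrime.notMem_of_isCoprime_of_mem hab haP hbP
  have hdiv : b ∉ P.asIdeal → P.valuation K (algebraMap R K a / algebraMap R K b) =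
      P.intValuation a := fun hbP => by
    rw [map_div₀, P.valuation_of_algebraMap, P.valuation_of_algebraMap,
      HeightOneSpectrum.intValuation_eq_one_iff.2 hbP, div_one]
  rw [← P.intValuation_le_pow_iff_mem]
  refine ⟨fun h => ?_, fun ⟨ha, hbP⟩ => (hdiv hbP).trans_le ha⟩
  have hbP := hone.1 (h.trans (by rw [← WithZero.exp_zero, WithZero.exp_le_exp]; omega))
  exact ⟨hdiv hbP ▸ h, hbP⟩

/-- The prime of `ℚ[X]` generated by the `D`-th cyclotomic polynomial. -/
noncomputable def cyclotomicPrime {D : ℕ} (hD : D ≠ 0) :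
    HeightOneSpectrum ℚ[X] where
  asIdeal := Ideal.span {cyclotomic D ℚ}
  isPrime := (Ideal.span_singleton_prime (cyclotomic_ne_zero D ℚ)).2
    (cyclotomic.irreducible_rat (Nat.pos_of_ne_zero hD)).prime
  ne_bot := by simpa using cyclotomic_ne_zero D ℚ

theorem mem_cyclotomicPrime {D : ℕ} {hD : D ≠ 0} {f : ℚ[X]} :
    f ∈ (cyclotomicPrime hD).asIdeal ↔ cyclotomic D ℚ ∣ f :=
  Ideal.mem_span_singleton

theorem cyclotomic_rat_dvd_X_pow_sub_one_iff {D : ℕ} (hD : D ≠ 0) {n : ℕ} :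
    cyclotomic D ℚ ∣ X ^ n - 1 ↔ D ∣ n := by
  have hζ := Complex.isPrimitiveRoot_exp D hD
  rw [cyclotomic_rat_dvd_iff_aeval_eq_zero hD hζ, ← hζ.pow_eq_one_iff_dvd, map_sub, map_pow,
    aeval_X, map_one, sub_eq_zero]

theorem cyclotomicPrime_intValuation_X_pow_sub_one {D n : ℕ} (hD : D ≠ 0) (hn : n ≠ 0) :
    (cyclotomicPrime hD).intValuation (X ^ n - 1) =
      if D ∣ n then WithZero.exp (-1 : ℤ) else 1 := by
  split_ifs with h
  · obtain ⟨g, hg⟩ := (cyclotomic_rat_dvd_X_pow_sub_one_iff hD).2 h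
    have hsq : Squarefree (X ^ n - 1 : ℚ[X]) :=
      (X_pow_sub_one_separable_iff.2 (Nat.cast_ne_zero.2 hn)).squarefree
    have hg_notMem : g ∉ (cyclotomicPrime hD).asIdeal := fun hmem =>
      (cyclotomic.irreducible_rat (Nat.pos_of_ne_zero hD)).not_isUnit
        ((squarefree_mul_iff.1 (hg ▸ hsq)).1 dvd_rfl (mem_cyclotomicPrime.1 hmem))
    rw [hg, map_mul, HeightOneSpectrum.intValuation_singleton _ (cyclotomic_ne_zero D ℚ) rfl,
      HeightOneSpectrum.intValuation_eq_one_iff.2 hg_notMem, mul_one]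
  · rwa [HeightOneSpectrum.intValuation_eq_one_iff, mem_cyclotomicPrime,
      cyclotomic_rat_dvd_X_pow_sub_one_iff hD]

theorem hasCyclotomicValues_cyclotomicPrime {D : ℕ} (hD : D ≠ 0) :
    HasCyclotomicValues ((cyclotomicPrime hD).valuation (RatFunc ℚ)) RatFunc.X D
      (WithZero.exp (-1 : ℤ)) where
  value_ne_zero := WithZero.exp_ne_zero
  map_base := by
    have hζ := Complex.isPrimitiveRoot_exp D hD
    rw [← RatFunc.algebraMap_X, HeightOneSpectrum.valuation_eq_one_iff_notMem,
      mem_cyclotomicPrime, cyclotomic_rat_dvd_iff_aeval_eq_zero hD hζ, aeval_X]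
    exact hζ.ne_zero hD
  map_one_sub_pow n hn := by
    have hsub : RatFunc.X ^ n - 1 = algebraMap ℚ[X] (RatFunc ℚ) (X ^ n - 1) := by
      rw [map_sub, map_pow, RatFunc.algebraMap_X, map_one]
    rw [Valuation.map_sub_swap, hsub, HeightOneSpectrum.valuation_of_algebraMap,
      cyclotomicPrime_intValuation_X_pow_sub_one hD hn]

theorem cyclotomic_sq_dvd_num_and_not_dvd_denom {D : ℕ} (hD : D ≠ 0) {f : RatFunc ℚ}
    (hf : (cyclotomicPrime hD).valuation (RatFunc ℚ) f ≤ WithZero.exp (-1 : ℤ) ^ 2) :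
    cyclotomic D ℚ ^ 2 ∣ f.num ∧ ¬ cyclotomic D ℚ ∣ f.denom := by
  rw [← f.num_div_denom, ← WithZero.exp_nsmul] at hf
  have hmem := (valuation_div_le_exp_neg_iff _ f.isCoprime_num_denom f.denom_ne_zero 2).1 hf
  have hideal : (cyclotomicPrime hD).asIdeal = Ideal.span {cyclotomic D ℚ} := rfl
  rwa [mem_cyclotomicPrime, hideal, Ideal.span_singleton_pow, Ideal.mem_span_singleton] at hmem

theorem prod_cyclotomic_sq_dvd {ι : Type*} (S : Finset ι) {d : ι → ℕ} (hd : Set.InjOn d S)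
    {f : ℚ[X]} (hf : ∀ j ∈ S, cyclotomic (d j) ℚ ^ 2 ∣ f) :
    ∏ j ∈ S, cyclotomic (d j) ℚ ^ 2 ∣ f :=
  prod_dvd_of_coprime (fun _ hi _ hj hij => (cyclotomic.isCoprime_rat (hd.ne hi hj hij)).pow) hf

end CyclotomicValues

theorem pow_mod_four_eq_three {n e : ℕ} (hn : n % 4 = 3) (he : Odd e) : n ^ e % 4 = 3 := by
  obtain ⟨i, rfl⟩ := he
  have hsq : n ^ 2 % 4 = 1 := by rw [Nat.pow_mod, hn]
  rw [pow_succ, pow_mul, Nat.mul_mod, Nat.pow_mod, hsq, one_pow, hn]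
  rfl

theorem injOn_pow_two_mul_sub_one {n : ℕ} (hn : 1 < n) (r : ℕ) :
    Set.InjOn (fun j => n ^ (2 * j - 1)) (Icc 1 r) := by
  intro i hi j hj hij
  have hexp := Nat.pow_right_injective hn hij
  rw [mem_coe, mem_Icc] at hi hj
  omega

theorem pow_two_mul_sub_one_mem_properDivisors {n r j : ℕ} (hn : 1 < n) (hj : j ∈ Icc 1 r) :
    n ^ (2 * j - 1) ∈ (n ^ (2 * r)).properDivisors := by
  have hlt : 2 * j - 1 < 2 * r := by
    rw [mem_Icc] at hj
    omega
  exact Nat.mem_properDivisors.2 ⟨pow_dvd_pow n hlt.le, Nat.pow_lt_pow_right hn hlt⟩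

theorem stmt13_general {N : ℕ} (hN : Odd N) (hN1 : 1 < N) {ι : Type*} (S : Finset ι) {d : ι → ℕ}
    (hd : Set.InjOn d S) (hS : ∀ j ∈ S, d j ∈ N.properDivisors ∧ d j % 4 = 3) :
    ∃ a b : ℚ[X], ¬ cyclotomic N ℚ ∣ b ∧ (∀ j ∈ S, ¬ cyclotomic (d j) ℚ ∣ b) ∧
      ((∑ k ∈ range ((N - 1) / 2 + 1),
          (1 + Q ^ (4 * k + 1)) * qPoch (Q ^ 2) (Q ^ 4) k ^ 3 * Q ^ k /
            ((1 + Q) * qPoch (Q ^ 4) (Q ^ 4) k ^ 3))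
        - (∑ i ∈ range N, Q ^ (2 * i)) * qPoch (Q ^ 3) (Q ^ 4) ((N - 1) / 2)
            / qPoch (Q ^ 5) (Q ^ 4) ((N - 1) / 2) * (Q ^ ((N - 1) / 2))⁻¹)
        * algebraMap ℚ[X] (RatFunc ℚ) b
      = algebraMap ℚ[X] (RatFunc ℚ)
          (cyclotomic N ℚ ^ 2 * (∏ j ∈ S, cyclotomic (d j) ℚ ^ 2) * a) := by
  obtain ⟨m, rfl⟩ := hN
  let f := ∑ k ∈ range (m + 1), wellPoisedTerm Q 1 k - wellPoisedValue Q m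
  have hf : ∀ D, 2 < D → D ∣ 2 * m + 1 → (D = 2 * m + 1 ∨ D % 4 = 3) →
      cyclotomic D ℚ ^ 2 ∣ f.num ∧ ¬ cyclotomic D ℚ ∣ f.denom := fun D hD2 hDm hD =>
    have hD0 : D ≠ 0 := by omega
    cyclotomic_sq_dvd_num_and_not_dvd_denom hD0 <|
      (hasCyclotomicValues_cyclotomicPrime hD0).map_sum_wellPoisedTerm_one_sub_wellPoisedValue_le
        hD2 hDm hD
  have hfN := hf (2 * m + 1) (by omega) dvd_rfl (.inl rfl)
  have hfS : ∀ j ∈ S, cyclotomic (d j) ℚ ^ 2 ∣ f.num ∧ ¬ cyclotomic (d j) ℚ ∣ f.denom :=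
    fun j hj => hf _ (by have := (hS j hj).2; omega) (Nat.mem_properDivisors.1 (hS j hj).1).1
      (.inr (hS j hj).2)
  have hcoprime : IsCoprime (cyclotomic (2 * m + 1) ℚ ^ 2) (∏ j ∈ S, cyclotomic (d j) ℚ ^ 2) :=
    IsCoprime.prod_right fun j hj =>
      (cyclotomic.isCoprime_rat (Nat.mem_properDivisors.1 (hS j hj).1).2.ne').pow
  obtain ⟨a, ha⟩ := hcoprime.mul_dvd hfN.1 (prod_cyclotomic_sq_dvd S hd fun j hj => (hfS j hj).1)
  refine ⟨a, f.denom, hfN.2, fun j hj => (hfS j hj).2, ?_⟩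
  have hf_mul : f * algebraMap ℚ[X] (RatFunc ℚ) f.denom = algebraMap ℚ[X] (RatFunc ℚ) f.num :=
    ((div_eq_iff (RatFunc.algebraMap_ne_zero f.denom_ne_zero)).1 f.num_div_denom).symm
  rw [← ha, ← hf_mul, show (2 * m + 1 - 1) / 2 = m by omega]
  simp only [f, wellPoisedTerm_one]
  rfl

/-- For positive integers `n ≡ 3 (mod 4)` and `r`, modulo
`Φ_{n^{2r}}(q)^2 ∏_{j=1}^r Φ_{n^{2j-1}}(q)^2`:
`∑_{k=0}^{(n^{2r}-1)/2} (1+q^{4k+1})(q^2;q^4)_k^3 q^k / ((1+q)(q^4;q^4)_k^3)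
 ≡ [n^{2r}]_{q^2} (q^3;q^4)_{(n^{2r}-1)/2} / (q^5;q^4)_{(n^{2r}-1)/2} · q^{(1-n^{2r})/2}`. -/
theorem stmt13 (n r : ℕ) (hn : 0 < n) (hr : 0 < r) (h : n % 4 = 3) :
    ∃ a b : Polynomial ℚ, ¬ (Polynomial.cyclotomic (n ^ (2 * r)) ℚ ∣ b) ∧
      (∀ j ∈ Finset.Icc 1 r, ¬ (Polynomial.cyclotomic (n ^ (2 * j - 1)) ℚ ∣ b)) ∧
      ((∑ k ∈ Finset.range ((n ^ (2 * r) - 1) / 2 + 1),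
          (1 + Q ^ (4 * k + 1)) * qPoch (Q ^ 2) (Q ^ 4) k ^ 3 * Q ^ k /
            ((1 + Q) * qPoch (Q ^ 4) (Q ^ 4) k ^ 3))
        - (∑ i ∈ Finset.range (n ^ (2 * r)), Q ^ (2 * i))
            * qPoch (Q ^ 3) (Q ^ 4) ((n ^ (2 * r) - 1) / 2)
            / qPoch (Q ^ 5) (Q ^ 4) ((n ^ (2 * r) - 1) / 2)
            * (Q ^ ((n ^ (2 * r) - 1) / 2))⁻¹)
        * algebraMap (Polynomial ℚ) (RatFunc ℚ) b
      = algebraMap (Polynomial ℚ) (RatFunc ℚ)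
          (Polynomial.cyclotomic (n ^ (2 * r)) ℚ ^ 2
            * (∏ j ∈ Finset.Icc 1 r, Polynomial.cyclotomic (n ^ (2 * j - 1)) ℚ ^ 2) * a) := by
  have hn1 : 1 < n := by omega
  exact stmt13_general (Odd.pow (Nat.odd_iff.2 (by omega))) (Nat.one_lt_pow (by omega) hn1)
    (Icc 1 r) (injOn_pow_two_mul_sub_one hn1 r) fun j hj =>
      ⟨pow_two_mul_sub_one_mem_properDivisors hn1 hj,
        pow_mod_four_eq_three h ⟨j - 1, by have := mem_Icc.1 hj; omega⟩⟩
end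

section
/- Let p ≡ 3 (mod 4) be a prime and r ≥ 1 an integer. Then the sum over k from 0 to (p^{2r}-1)/2 of ((1/2)_k)^3/(k!)^3 is congruent to p^{2r} · ∏_{k=1}^{(p^{2r}-1)/2} (4k-1)/(4k+1) modulo p^{2r+2} (i.e., the difference of the two rational numbers has p-adic valuation at least 2r+2). -/
/-!
Put `q = p ^ (2 * r) = 4 * l + 1` and `w = ((1/2)_l / l!) ^ 2`. Both sides are congruent to `w`
modulo `p ^ (2 * r + 2)`.

The sum is the value at `x = -1/2` of a truncated `₃F₂(1/2, -x, x + 1; 1, 1; 1)`, a polynomial of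
degree at most `2 * l` in `x * (x + 1)`. A two-term recurrence shows that its value at a natural
number `s ≤ 2 * l` is `0` for `s` odd and `((1/2)_j / j!) ^ 2` for `s = 2 * j`, in particular `w` at
`s = 2 * l`. Interpolate at these nodes. If `v` is the `p`-adic valuation of `2 * s + 1`, the weight
of a node `s < 2 * l` is divisible by `p ^ (2 * (2 * r - v))`. For `s = 2 * j` the value is
divisible by `p ^ (2 * ⌈v / 2⌉)`, because `p ≡ 3 [MOD 4]` forces carries when `j` is added to itself
in base `p`. As `v < 2 * r`, all terms but the last vanish modulo `p ^ (2 * r + 2)`; as the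
weights sum to `1`, the last one is congruent to `w`.

Pairing factors turns the right-hand side into `w` times a product of quotients of numbers
`1 - (q / a) ^ 2` with `0 < a < q`, all of which are congruent to `1` modulo `p ^ 2`.
-/

open Finset

/-- The rising factorial (Pochhammer symbol) `(a)_k = a(a+1)⋯(a+k-1)` for `a : ℚ`. -/
def risingFactorial (a : ℚ) (k : ℕ) : ℚ := ∏ i ∈ Finset.range k, (a + i)

section RisingFactorial

lemma risingFactorial_zero (a : ℚ) : risingFactorial a 0 = 1 := rfl

lemma risingFactorial_succ (a : ℚ) (k : ℕ) :
    risingFactorial a (k + 1) = risingFactorial a k * (a + k) :=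
  prod_range_succ _ k

lemma risingFactorial_add_two_mul (a : ℚ) (k : ℕ) :
    risingFactorial (a + 2) k * (a * (a + 1))
      = risingFactorial a k * ((a + k) * (a + k + 1)) := by
  induction k with
  | zero => simp [risingFactorial_zero]
  | succ k ih =>
    rw [risingFactorial_succ, risingFactorial_succ]
    push_cast
    linear_combination (a + 2 + k) * ih

lemma risingFactorial_neg_natCast_of_lt {s k : ℕ} (h : s < k) :
    risingFactorial (-(s : ℚ)) k = 0 :=
  prod_eq_zero (mem_range.mpr h) (neg_add_cancel _)

lemma risingFactorial_half (k : ℕ) :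
    risingFactorial (1 / 2) k = k.factorial * k.centralBinom / 4 ^ k := by
  induction k with
  | zero => simp [risingFactorial_zero]
  | succ k ih =>
    have hrec : ((k : ℚ) + 1) * (k + 1).centralBinom = 2 * (2 * k + 1) * k.centralBinom := by
      exact_mod_cast Nat.succ_mul_centralBinom_succ k
    rw [risingFactorial_succ, ih, Nat.factorial_succ, pow_succ]
    push_cast
    field_simp
    linear_combination -2 * hrec

lemma risingFactorial_half_div_factorial (k : ℕ) :
    risingFactorial (1 / 2) k / k.factorial = k.centralBinom / 4 ^ k := by
  rw [risingFactorial_half]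
  field_simp

lemma risingFactorial_half_div_factorial_eq_prod (k : ℕ) :
    risingFactorial (1 / 2) k / k.factorial = ∏ i ∈ range k, (4 * (i : ℚ) + 2) / (4 * i + 4) := by
  induction k with
  | zero => simp [risingFactorial_zero]
  | succ k ih =>
    rw [prod_range_succ, ← ih, risingFactorial_succ, Nat.factorial_succ]
    push_cast
    field_simp
    ring

end RisingFactorial

section TruncatedHypergeometric

/-- The sum of the first `n` terms of `₃F₂(1/2, -x, x + 1; 1, 1; 1)`, which interpolates between the
sum of the `((1/2)_k / k!) ^ 3` at `x = -1/2` and values in closed form at `x ∈ ℕ`. -/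
def truncatedHypergeometric (n : ℕ) (x : ℚ) : ℚ :=
  ∑ k ∈ range n,
    risingFactorial (1 / 2) k * risingFactorial (-x) k * risingFactorial (x + 1) k
      / (k.factorial : ℚ) ^ 3

lemma truncatedHypergeometric_neg_half (n : ℕ) :
    truncatedHypergeometric n (-1 / 2)
      = ∑ k ∈ range n, risingFactorial (1 / 2) k ^ 3 / (k.factorial : ℚ) ^ 3 := by
  refine sum_congr rfl fun k _ ↦ ?_
  norm_num
  ring

-- The right-hand side, `n ^ 3` times the `n`-th term of a shifted series, is Zeilberger's
-- certificate for the recurrence in `x`.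
lemma truncatedHypergeometric_add_two_sub (n : ℕ) (x : ℚ) :
    ((x + 2) ^ 2 * truncatedHypergeometric n (x + 2) - (x + 1) ^ 2 * truncatedHypergeometric n x)
        * ((x + 1) * (x + 2))
      = -2 * (2 * x + 3) * n ^ 3 * (risingFactorial (1 / 2) n / (n.factorial : ℚ) ^ 3)
        * (risingFactorial (-x - 2) n * risingFactorial (x + 1) n) := by
  induction n with
  | zero => simp [truncatedHypergeometric]
  | succ n ih =>
    have hsucc (y : ℚ) : truncatedHypergeometric (n + 1) y = truncatedHypergeometric n y
        + risingFactorial (1 / 2) n / (n.factorial : ℚ) ^ 3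
          * (risingFactorial (-y) n * risingFactorial (y + 1) n) := by
      rw [truncatedHypergeometric, sum_range_succ, ← truncatedHypergeometric]
      ring
    have hcoeff : risingFactorial (1 / 2) (n + 1) / ((n + 1).factorial : ℚ) ^ 3 * (n + 1) ^ 3
        = risingFactorial (1 / 2) n / (n.factorial : ℚ) ^ 3 * (1 / 2 + n) := by
      rw [risingFactorial_succ, Nat.factorial_succ]
      push_cast
      field_simp
    have hneg := risingFactorial_add_two_mul (-x - 2) n
    have hpos := risingFactorial_add_two_mul (x + 1) n
    rw [hsucc, hsucc, risingFactorial_succ (-x - 2), risingFactorial_succ (x + 1)]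
    rw [show -x - 2 + 2 = -x by ring] at hneg
    rw [show x + 1 + 2 = x + 2 + 1 by ring] at hpos
    rw [show -(x + 2) = -x - 2 by ring]
    push_cast
    set c := risingFactorial (1 / 2) n / (n.factorial : ℚ) ^ 3
    set u := risingFactorial (-x - 2) n
    set v := risingFactorial (x + 1) n
    linear_combination ih + (x + 2) ^ 2 * c * u * hpos - (x + 1) ^ 2 * c * v * hneg
      + 2 * (2 * x + 3) * (u * (-x - 2 + n)) * (v * (x + 1 + n)) * hcoeff

lemma truncatedHypergeometric_natCast_add_two {n s : ℕ} (h : s + 3 ≤ n) :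
    ((s : ℚ) + 2) ^ 2 * truncatedHypergeometric n (s + 2)
      = (s + 1) ^ 2 * truncatedHypergeometric n s := by
  have hrec := truncatedHypergeometric_add_two_sub n s
  have hzero : risingFactorial (-(s : ℚ) - 2) n = 0 := by
    rw [← risingFactorial_neg_natCast_of_lt (s := s + 2) (k := n) (by lia)]
    congr 1
    push_cast
    ring
  rw [hzero, zero_mul, mul_zero] at hrec
  exact sub_eq_zero.mp ((mul_eq_zero.mp hrec).resolve_right (by positivity))

lemma truncatedHypergeometric_natCast_of_lt {n s : ℕ} (h : s < n) :
    truncatedHypergeometric n s = truncatedHypergeometric (s + 1) s := by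
  refine (sum_subset (range_subset_range.mpr h) fun k _ hk ↦ ?_).symm
  rw [risingFactorial_neg_natCast_of_lt (by simpa using hk)]
  simp

lemma truncatedHypergeometric_odd {n j : ℕ} (h : 2 * j + 1 < n) :
    truncatedHypergeometric n (2 * j + 1 : ℕ) = 0 := by
  induction j with
  | zero =>
    rw [truncatedHypergeometric_natCast_of_lt h]
    norm_num [truncatedHypergeometric, sum_range_succ, risingFactorial]
  | succ j ih =>
    have hrec := truncatedHypergeometric_natCast_add_two (n := n) (s := 2 * j + 1) (by lia)
    rw [ih (by lia), mul_zero] at hrec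
    rw [show 2 * (j + 1) + 1 = 2 * j + 1 + 2 by ring, Nat.cast_add _ 2]
    exact (mul_eq_zero.mp hrec).resolve_left (by positivity)

lemma truncatedHypergeometric_even {n j : ℕ} (h : 2 * j < n) :
    truncatedHypergeometric n (2 * j : ℕ) = (risingFactorial (1 / 2) j / j.factorial) ^ 2 := by
  induction j with
  | zero =>
    rw [truncatedHypergeometric_natCast_of_lt h]
    simp [truncatedHypergeometric, risingFactorial_zero]
  | succ j ih =>
    have hrec := truncatedHypergeometric_natCast_add_two (n := n) (s := 2 * j) (by lia)
    rw [ih (by lia)] at hrec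
    have hpos : (((2 * j : ℕ) : ℚ) + 2) ^ 2 ≠ 0 := by positivity
    apply mul_left_cancel₀ hpos
    rw [show 2 * (j + 1) = 2 * j + 2 by ring, Nat.cast_add _ 2, Nat.cast_ofNat, hrec,
      risingFactorial_succ, Nat.factorial_succ]
    push_cast
    field_simp
    ring

end TruncatedHypergeometric

section Interpolation

open Polynomial

lemma eval_basis_mul_prod_erase {F ι : Type*} [Field F] [DecidableEq ι] {s : Finset ι} {v : ι → F}
    {i : ι} (hv : Set.InjOn v s) (hi : i ∈ s) (x : F) :
    (Lagrange.basis s v i).eval x * ((x - v i) * ∏ j ∈ s.erase i, (v i - v j))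
      = (Lagrange.nodal s v).eval x := by
  have hne : ∏ j ∈ s.erase i, (v i - v j) ≠ 0 := prod_ne_zero_iff.mpr fun j hj ↦
    sub_ne_zero.mpr fun h ↦ ne_of_mem_erase hj (hv (mem_of_mem_erase hj) hi h.symm)
  have hbasis : (Lagrange.basis s v i).eval x
      = (∏ j ∈ s.erase i, (v i - v j))⁻¹ * ∏ j ∈ s.erase i, (x - v j) := by
    simp only [Lagrange.basis, Lagrange.basisDivisor, eval_prod, eval_mul, eval_C, eval_sub,
      eval_X, prod_mul_distrib, prod_inv_distrib]
  rw [hbasis, Lagrange.eval_nodal, ← mul_prod_erase s _ hi]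
  field_simp

/-- The pronic numbers `t (t + 1)`, used as interpolation nodes: `(-x)_k (x + 1)_k` is a polynomial
in `x (x + 1)`. -/
def pronic (t : ℕ) : ℚ := t * (t + 1)

lemma pronic_sub_pronic (s t : ℕ) : pronic s - pronic t = (s - t) * (s + t + 1) := by
  simp only [pronic]
  ring

lemma pronic_injective : Function.Injective pronic := by
  intro s t hst
  have hmul : ((s : ℚ) - t) * (s + t + 1) = 0 := by rw [← pronic_sub_pronic, hst, sub_self]
  exact_mod_cast sub_eq_zero.mp ((mul_eq_zero.mp hmul).resolve_right (by positivity))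

lemma eval_nodal_pronic (k : ℕ) (x : ℚ) :
    (Lagrange.nodal (range k) pronic).eval (x * (x + 1))
      = (-1) ^ k * (risingFactorial (-x) k * risingFactorial (x + 1) k) := by
  have hneg : (-1 : ℚ) ^ k = ∏ i ∈ range k, -1 := by simp
  rw [Lagrange.eval_nodal, risingFactorial, risingFactorial, hneg, ← prod_mul_distrib,
    ← prod_mul_distrib]
  refine prod_congr rfl fun i _ ↦ ?_
  rw [pronic]
  ring

lemma exists_polynomial_truncatedHypergeometric (n : ℕ) :
    ∃ P : ℚ[X], P.degree < n ∧ ∀ x, P.eval (x * (x + 1)) = truncatedHypergeometric n x := by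
  refine ⟨∑ k ∈ range n, ((-1) ^ k * risingFactorial (1 / 2) k / (k.factorial : ℚ) ^ 3) •
    Lagrange.nodal (range k) pronic, ?_, fun x ↦ ?_⟩
  · rw [← mem_degreeLT]
    refine Submodule.sum_mem _ fun k hk ↦ Submodule.smul_mem _ _ ?_
    rw [mem_degreeLT, Lagrange.degree_nodal, card_range]
    exact_mod_cast mem_range.mp hk
  · rw [eval_finsetSum]
    refine sum_congr rfl fun k _ ↦ ?_
    have hsign : ((-1 : ℚ) ^ k) * (-1) ^ k = 1 := by rw [← mul_pow]; simp
    rw [eval_smul, eval_nodal_pronic, smul_eq_mul]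
    linear_combination (risingFactorial (1 / 2) k * risingFactorial (-x) k *
      risingFactorial (x + 1) k / (k.factorial : ℚ) ^ 3) * hsign

lemma truncatedHypergeometric_eq_sum_basis (n : ℕ) (x : ℚ) :
    truncatedHypergeometric n x = ∑ s ∈ range n,
      truncatedHypergeometric n s * (Lagrange.basis (range n) pronic s).eval (x * (x + 1)) := by
  obtain ⟨P, hdeg, heval⟩ := exists_polynomial_truncatedHypergeometric n
  have hP := Lagrange.eq_interpolate (v := pronic) pronic_injective.injOn
    (hdeg.trans_eq (by rw [card_range]))
  rw [← heval, hP, Lagrange.interpolate_apply, eval_finsetSum]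
  refine sum_congr rfl fun s _ ↦ ?_
  rw [eval_mul, eval_C, ← heval, pronic]

/-- The weight at `x = -1/2`, that is `x (x + 1) = -1/4`, of the node `s (s + 1)` in Lagrange
interpolation at the nodes `t (t + 1)`, `0 ≤ t ≤ M`. -/
noncomputable def lagrangeWeight (M s : ℕ) : ℚ :=
  (Lagrange.basis (range (M + 1)) pronic s).eval (-1 / 4)

lemma truncatedHypergeometric_neg_half_eq_sum (M : ℕ) :
    truncatedHypergeometric (M + 1) (-1 / 2)
      = ∑ s ∈ range (M + 1), truncatedHypergeometric (M + 1) s * lagrangeWeight M s := by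
  rw [truncatedHypergeometric_eq_sum_basis]
  norm_num [lagrangeWeight]

lemma sum_lagrangeWeight (M : ℕ) : ∑ s ∈ range (M + 1), lagrangeWeight M s = 1 := by
  simp only [lagrangeWeight]
  rw [← eval_finsetSum, Lagrange.sum_basis pronic_injective.injOn nonempty_range_add_one, eval_one]

lemma prod_range_pronic_sub (s : ℕ) :
    ∏ t ∈ range s, (pronic s - pronic t) = (2 * s).factorial := by
  have hfactor : ∀ t ∈ range s, pronic s - pronic t = ((s - t : ℕ) : ℚ) * (s + 1 + t : ℕ) := by
    intro t ht
    rw [pronic_sub_pronic, Nat.cast_sub (mem_range.mp ht).le]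
    push_cast
    ring
  rw [prod_congr rfl hfactor, prod_mul_distrib, ← Nat.cast_prod, ← Nat.cast_prod,
    ← Nat.descFactorial_eq_prod_range, ← Nat.ascFactorial_eq_prod_range, Nat.descFactorial_self,
    ← Nat.cast_mul, Nat.factorial_mul_ascFactorial, two_mul]

lemma prod_erase_pronic_sub (s d : ℕ) :
    (2 * s + 1) * ∏ t ∈ (range (s + d + 1)).erase s, (pronic s - pronic t)
      = (-1) ^ d * (d.factorial * (2 * s + d + 1).factorial) := by
  induction d with
  | zero =>
    rw [add_zero, range_add_one, erase_insert notMem_range_self, prod_range_pronic_sub,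
      add_zero, Nat.factorial_succ]
    push_cast
    simp
  | succ d ih =>
    rw [← add_assoc, range_add_one, erase_insert_of_ne (by lia), prod_insert (by simp),
      pronic_sub_pronic, Nat.factorial_succ, ← add_assoc, Nat.factorial_succ (2 * s + d + 1)]
    push_cast
    linear_combination (-(d + 1) * (2 * s + d + 2) : ℚ) * ih

lemma eval_nodal_pronic_neg_quarter (M : ℕ) :
    (Lagrange.nodal (range (M + 1)) pronic).eval (-1 / 4) * (4 * 16 ^ M)
      = (-1) ^ (M + 1) * ((2 * M + 1) * M.centralBinom * (2 * M + 1).factorial) := by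
  have hnodal : (Lagrange.nodal (range (M + 1)) pronic).eval (-1 / 4)
      = (-1) ^ (M + 1) * risingFactorial (1 / 2) (M + 1) ^ 2 := by
    rw [sq]
    convert eval_nodal_pronic (M + 1) (-1 / 2) using 3 <;> norm_num
  have hcentral : (M.centralBinom : ℚ) * M.factorial ^ 2 = (2 * M).factorial := by
    have h := Nat.choose_mul_factorial_mul_factorial (n := 2 * M) (k := M) (by lia)
    rw [show 2 * M - M = M by lia, mul_assoc, ← sq] at h
    exact_mod_cast h
  rw [hnodal, risingFactorial_succ, risingFactorial_half, Nat.factorial_succ, Nat.cast_mul,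
    ← hcentral, show (16 : ℚ) = 4 ^ 2 by norm_num, ← pow_mul, mul_comm 2 M, pow_mul]
  push_cast
  field_simp
  ring

lemma lagrangeWeight_mul_eq (s d : ℕ) :
    lagrangeWeight (s + d) s * ((2 * s + 1) * 16 ^ (s + d))
      = (-1) ^ s * ((2 * (s + d : ℕ) + 1) * (s + d).centralBinom
        * (2 * (s + d) + 1).choose d) := by
  have hbasis := eval_basis_mul_prod_erase (s := range (s + d + 1)) pronic_injective.injOn
    (mem_range.mpr (by lia : s < s + d + 1)) (-1 / 4)
  have hnodal := eval_nodal_pronic_neg_quarter (s + d)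
  have hdiff := prod_erase_pronic_sub s d
  have hchoose : ((2 * (s + d) + 1).choose d : ℚ) * (d.factorial * (2 * s + d + 1).factorial)
      = (2 * (s + d) + 1).factorial := by
    have h := Nat.choose_mul_factorial_mul_factorial (n := 2 * (s + d) + 1) (k := d) (by lia)
    rw [show 2 * (s + d) + 1 - d = 2 * s + d + 1 by lia, mul_assoc] at h
    exact_mod_cast h
  have hpos : (-1 : ℚ) ^ d * (d.factorial * (2 * s + d + 1).factorial) ≠ 0 := by positivity
  apply mul_right_cancel₀ hpos
  have hgap : (-1 / 4 : ℚ) - pronic s = -(2 * s + 1) ^ 2 / 4 := by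
    rw [pronic]
    ring
  rw [← hbasis, ← hchoose, ← lagrangeWeight, hgap] at hnodal
  linear_combination
    (-lagrangeWeight (s + d) s * (2 * s + 1) * 16 ^ (s + d)) * hdiff - hnodal

end Interpolation

section PadicBall

variable {p : ℕ} [Fact p.Prime]

/-- The fractional ideal `p ^ n ℤ_(p)` of `ℚ`: membership of `x - y` is congruence modulo `p ^ n`
of rational numbers, for an exponent `n` that may be negative. -/
def padicBall (p : ℕ) [Fact p.Prime] (n : ℤ) : AddSubgroup ℚ where
  carrier := {x | padicNorm p x ≤ (p : ℚ) ^ (-n)}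
  zero_mem' := by simp [zpow_nonneg]
  add_mem' hx hy := padicNorm.nonarchimedean.trans (max_le hx hy)
  neg_mem' hx := by simpa only [Set.mem_ofPred_eq, padicNorm.neg] using hx

lemma mem_padicBall {x : ℚ} {n : ℤ} : x ∈ padicBall p n ↔ padicNorm p x ≤ (p : ℚ) ^ (-n) :=
  Iff.rfl

lemma padicBall_antitone : Antitone (padicBall p) := fun _ _ hmn _ hx ↦
  (mem_padicBall.mp hx).trans (zpow_le_zpow_right₀
    (Nat.one_le_cast.mpr (Fact.out : p.Prime).one_le) (neg_le_neg hmn))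

lemma mul_mem_padicBall {x y : ℚ} {m n : ℤ} (hx : x ∈ padicBall p m) (hy : y ∈ padicBall p n) :
    x * y ∈ padicBall p (m + n) := by
  have hp : (p : ℚ) ≠ 0 := by exact_mod_cast (Fact.out : p.Prime).ne_zero
  rw [mem_padicBall, padicNorm.mul, neg_add, zpow_add₀ hp]
  exact mul_le_mul hx hy (padicNorm.nonneg _) (by positivity)

lemma div_mem_padicBall {x : ℚ} {n : ℤ} (hx : x ∈ padicBall p n) (y : ℚ) :
    x / y ∈ padicBall p (n - padicValRat p y) := by
  rcases eq_or_ne y 0 with rfl | hy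
  · simp [zero_mem]
  have hinv : y⁻¹ ∈ padicBall p (-padicValRat p y) := by
    rw [mem_padicBall, padicNorm.eq_zpow_of_nonzero (inv_ne_zero hy), padicValRat.inv]
  rw [div_eq_mul_inv, sub_eq_add_neg]
  exact mul_mem_padicBall hx hinv

lemma natCast_mem_padicBall {a n : ℕ} : (a : ℚ) ∈ padicBall p n ↔ p ^ n ∣ a := by
  have h := padicNorm.dvd_iff_norm_le (p := p) (n := n) (z := a)
  rw [Int.cast_natCast] at h
  exact h.symm.trans (by norm_cast)

lemma mul_sub_one_mem_padicBall {x y : ℚ} {n : ℤ} (hn : 0 ≤ n) (hx : x - 1 ∈ padicBall p n)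
    (hy : y - 1 ∈ padicBall p n) : x * y - 1 ∈ padicBall p n := by
  have hxy := padicBall_antitone (by lia : n ≤ n + n) (mul_mem_padicBall hx hy)
  convert add_mem (add_mem hxy hx) hy using 1
  ring

lemma prod_sub_one_mem_padicBall {ι : Type*} {s : Finset ι} {f : ι → ℚ} {n : ℤ} (hn : 0 ≤ n)
    (hf : ∀ i ∈ s, f i - 1 ∈ padicBall p n) : ∏ i ∈ s, f i - 1 ∈ padicBall p n :=
  prod_induction f (· - 1 ∈ padicBall p n) (fun _ _ ↦ mul_sub_one_mem_padicBall hn)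
    (by simp [zero_mem]) hf

lemma ne_zero_and_padicValRat_eq_zero_of_sub_one_mem {x : ℚ} (hx : x - 1 ∈ padicBall p 1) :
    x ≠ 0 ∧ padicValRat p x = 0 := by
  have hp : (1 : ℚ) < p := by exact_mod_cast (Fact.out : p.Prime).one_lt
  have hlt : padicNorm p (x - 1) < 1 :=
    lt_of_le_of_lt hx (by simpa using inv_lt_one_of_one_lt₀ hp)
  have hnorm : padicNorm p x = 1 := by
    have h := padicNorm.add_eq_max_of_ne (p := p) (q := x - 1) (r := 1) (by simpa using hlt.ne)
    rwa [sub_add_cancel, padicNorm.one, max_eq_right hlt.le] at h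
  have hx0 : x ≠ 0 := by
    rintro rfl
    simp at hnorm
  rw [padicNorm.eq_zpow_of_nonzero hx0] at hnorm
  exact ⟨hx0, by simpa using (zpow_eq_one_iff_right₀ (by positivity) hp.ne').mp hnorm⟩

lemma div_sub_one_mem_padicBall {x y : ℚ} {n : ℤ} (hn : 0 < n) (hx : x - 1 ∈ padicBall p n)
    (hy : y - 1 ∈ padicBall p n) : x / y - 1 ∈ padicBall p n := by
  obtain ⟨hy0, hval⟩ := ne_zero_and_padicValRat_eq_zero_of_sub_one_mem (padicBall_antitone hn hy)
  have hxy : x - y ∈ padicBall p n := by simpa using sub_mem hx hy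
  rw [div_sub_one hy0]
  simpa [hval] using div_mem_padicBall hxy y

lemma exists_mul_eq_of_mem_padicBall {x : ℚ} {n : ℕ} (hx : x ∈ padicBall p n) :
    ∃ a b : ℤ, ¬ (p : ℤ) ∣ b ∧ x * b = (p : ℚ) ^ n * a := by
  have hmul : x * x.den = x.num := Rat.mul_den_eq_num x
  have hnum_mem : (x.num : ℚ) ∈ padicBall p n := by
    have hden : (x.den : ℚ) ∈ padicBall p (0 : ℕ) := natCast_mem_padicBall.mpr (by simp)
    simpa [hmul] using mul_mem_padicBall hx hden
  obtain ⟨a, ha⟩ := padicNorm.dvd_iff_norm_le.mpr hnum_mem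
  refine ⟨a, x.den, fun hdvd ↦ ?_, by rw [Int.cast_natCast, hmul, ha]; push_cast; rfl⟩
  have hnum : padicNorm p x.num = 1 := by
    rw [padicNorm.int_eq_one_iff]
    intro hdvd_num
    have hgcd := Nat.dvd_gcd (Int.natCast_dvd.mp hdvd_num) (Int.natCast_dvd_natCast.mp hdvd)
    rw [x.reduced.gcd_eq_one] at hgcd
    exact (Fact.out : p.Prime).not_dvd_one hgcd
  have hden : padicNorm p x.den < 1 := by exact_mod_cast (padicNorm.int_lt_one_iff x.den).mpr hdvd
  have hx1 : padicNorm p x ≤ 1 := by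
    simpa [mem_padicBall] using padicBall_antitone (Nat.cast_nonneg n) hx
  have hlt := mul_lt_one_of_nonneg_of_lt_one_right hx1 (padicNorm.nonneg _) hden
  rw [← padicNorm.mul, hmul, hnum] at hlt
  exact lt_irrefl _ hlt

end PadicBall

section CentralBinom

lemma le_mod_add_mod_of_dvd_four_mul_add_one {q j : ℕ} (hq : q % 4 = 3) (hdvd : q ∣ 4 * j + 1) :
    q ≤ j % q + j % q := by
  have hlt : j % q < q := Nat.mod_lt j (by lia)
  have hmod : q ∣ 4 * (j % q) + 1 := by
    have hsplit : 4 * j + 1 = q * (4 * (j / q)) + (4 * (j % q) + 1) := by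
      rw [← mul_left_comm, ← add_assoc, ← mul_add, Nat.div_add_mod]
    rwa [hsplit, Nat.dvd_add_right (dvd_mul_right _ _)] at hdvd
  obtain ⟨c, hc⟩ := hmod
  have hc4 : c < 4 := by
    by_contra! h4
    have := Nat.mul_le_mul_left q h4
    lia
  interval_cases c <;> lia

-- Kummer's theorem: in base `p`, adding `j` to itself carries at each odd position below `v`,
-- where the power of `p` is `3` modulo `4`.
lemma pow_dvd_centralBinom_of_pow_dvd {p v j : ℕ} [Fact p.Prime] (h : p % 4 = 3)
    (hdvd : p ^ v ∣ 4 * j + 1) : p ^ ((v + 1) / 2) ∣ j.centralBinom := by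
  rw [padicValNat_dvd_iff_le (Nat.centralBinom_ne_zero j), Nat.centralBinom, two_mul,
    padicValNat_choose' (b := Nat.log p (j + j) + v + 1) (by lia)]
  have hcard : #((range ((v + 1) / 2)).image fun t ↦ 2 * t + 1) = (v + 1) / 2 := by
    rw [card_image_of_injective _ fun a b hab ↦ by lia, card_range]
  refine hcard.symm.le.trans (card_le_card fun i hi ↦ ?_)
  obtain ⟨t, ht, rfl⟩ := mem_image.mp hi
  rw [mem_range] at ht
  refine mem_filter.mpr ⟨mem_Ico.mpr (by lia), le_mod_add_mod_of_dvd_four_mul_add_one ?_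
    ((pow_dvd_pow p (by lia)).trans hdvd)⟩
  rw [pow_succ, pow_mul, Nat.mul_mod, Nat.pow_mod (p ^ 2), Nat.pow_mod p, h]
  simp

end CentralBinom

section Congruence

variable {p : ℕ} [Fact p.Prime]

lemma padicValNat_lt_of_lt_pow {a m : ℕ} (ha : a ≠ 0) (h : a < p ^ m) : padicValNat p a < m := by
  contrapose! h
  exact Nat.le_of_dvd (Nat.pos_of_ne_zero ha) ((padicValNat_dvd_iff_le ha).mpr h)

lemma padicValRat_two_pow (hp : p ≠ 2) (n : ℕ) : padicValRat p ((2 : ℚ) ^ n) = 0 := by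
  have htwo : padicValRat p 2 = 0 := by exact_mod_cast padicValNat_primes hp
  rw [padicValRat.pow, htwo, mul_zero]

lemma prime_pow_div_mem_padicBall {a m : ℕ} (h : a < p ^ m) :
    (p ^ m : ℚ) / a ∈ padicBall p 1 := by
  rcases eq_or_ne a 0 with rfl | ha
  · simp [zero_mem]
  have hpow : ((p ^ m : ℕ) : ℚ) ∈ padicBall p m := natCast_mem_padicBall.mpr dvd_rfl
  have hval := padicValNat_lt_of_lt_pow ha h
  rw [← Nat.cast_pow]
  refine padicBall_antitone ?_ (div_mem_padicBall hpow a)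
  rw [padicValRat.of_nat]
  lia

lemma risingFactorial_half_div_factorial_mem_padicBall {v j : ℕ} (h : p % 4 = 3)
    (hdvd : p ^ v ∣ 4 * j + 1) :
    risingFactorial (1 / 2) j / j.factorial ∈ padicBall p ((v + 1) / 2 : ℕ) := by
  have hcentral := natCast_mem_padicBall.mpr (pow_dvd_centralBinom_of_pow_dvd h hdvd)
  have hval := padicValRat_two_pow (p := p) (by lia) (2 * j)
  rw [risingFactorial_half_div_factorial, show (4 : ℚ) = 2 ^ 2 by norm_num, ← pow_mul]
  simpa [hval] using div_mem_padicBall hcentral (2 ^ (2 * j))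

lemma le_padicValNat_choose_add {m s d : ℕ} (hm : p ^ m = 2 * (s + d) + 1) (hd : d ≠ 0) :
    m ≤ padicValNat p ((2 * (s + d) + 1).choose d) + padicValNat p (2 * s + 1) := by
  have hchoose := Nat.factorization_choose_prime_pow_add_factorization (n := m)
    (Fact.out : p.Prime) (by lia : d ≤ p ^ m) hd
  rw [Nat.factorization_def _ Fact.out, Nat.factorization_def _ Fact.out, hm] at hchoose
  have hdvd : p ^ padicValNat p d ∣ 2 * d + (2 * s + 1) := by
    rw [show 2 * d + (2 * s + 1) = p ^ m by lia]
    exact pow_dvd_pow p (by lia)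
  have hval : padicValNat p d ≤ padicValNat p (2 * s + 1) := by
    rw [← padicValNat_dvd_iff_le (by lia)]
    exact (Nat.dvd_add_right (pow_padicValNat_dvd.mul_left 2)).mp hdvd
  lia

lemma lagrangeWeight_mem_padicBall {m M s : ℕ} (hp : p ≠ 2) (hM : p ^ m = 2 * M + 1) (hs : s < M) :
    lagrangeWeight M s ∈ padicBall p (2 * (m - padicValNat p (2 * s + 1))) := by
  obtain ⟨d, rfl⟩ := Nat.exists_eq_add_of_le hs.le
  have hchoose := le_padicValNat_choose_add hM (by lia)
  set c := (2 * (s + d) + 1).choose d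
  have hdvd : p ^ (m + padicValNat p c) ∣ (2 * (s + d) + 1) * c * (s + d).centralBinom := by
    rw [pow_add, hM]
    exact (mul_dvd_mul_left _ pow_padicValNat_dvd).mul_right _
  have hnum := zsmul_mem (natCast_mem_padicBall.mpr hdvd) ((-1) ^ s)
  have hdenom : padicValRat p ((2 * s + 1 : ℕ) * 2 ^ (4 * (s + d)))
      = padicValNat p (2 * s + 1) := by
    rw [padicValRat.mul (by positivity) (by positivity), padicValRat_two_pow hp,
      padicValRat.of_nat, add_zero]
  have hweight : lagrangeWeight (s + d) s
      = ((-1 : ℤ) ^ s) • (((2 * (s + d) + 1) * c * (s + d).centralBinom : ℕ) : ℚ)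
        / ((2 * s + 1 : ℕ) * 2 ^ (4 * (s + d))) := by
    have hmul := lagrangeWeight_mul_eq s d
    rw [eq_div_iff (by positivity), pow_mul, zsmul_eq_mul, show (2 : ℚ) ^ 4 = 16 by norm_num]
    push_cast at hmul ⊢
    linear_combination hmul
  rw [hweight]
  refine padicBall_antitone ?_ (div_mem_padicBall hnum _)
  rw [hdenom]
  lia

lemma risingFactorial_half_div_factorial_sq_mem_padicBall {r l : ℕ} (h : p % 4 = 3)
    (hl : p ^ (2 * r) = 4 * l + 1) :
    (risingFactorial (1 / 2) l / l.factorial) ^ 2 ∈ padicBall p (2 * r) := by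
  have hsqrt := risingFactorial_half_div_factorial_mem_padicBall (v := 2 * r) h hl.dvd
  rw [sq]
  refine padicBall_antitone ?_ (mul_mem_padicBall hsqrt hsqrt)
  lia

lemma truncatedHypergeometric_mul_lagrangeWeight_mem_padicBall {r l s : ℕ} (h : p % 4 = 3)
    (hl : p ^ (2 * r) = 4 * l + 1) (hs : s < 2 * l) :
    truncatedHypergeometric (2 * l + 1) s * lagrangeWeight (2 * l) s
      ∈ padicBall p (2 * r + 2) := by
  rcases s.even_or_odd' with ⟨j, rfl | rfl⟩
  · have hweight := lagrangeWeight_mem_padicBall (p := p) (m := 2 * r) (by lia) (by lia) hs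
    rw [show 2 * (2 * j) + 1 = 4 * j + 1 by ring] at hweight
    have hval := padicValNat_lt_of_lt_pow (p := p) (m := 2 * r) (by lia : 4 * j + 1 ≠ 0) (by lia)
    have hsqrt := risingFactorial_half_div_factorial_mem_padicBall h
      (pow_padicValNat_dvd (p := p) (n := 4 * j + 1))
    rw [truncatedHypergeometric_even (by lia), sq]
    refine padicBall_antitone ?_ (mul_mem_padicBall (mul_mem_padicBall hsqrt hsqrt) hweight)
    lia
  · rw [truncatedHypergeometric_odd (by lia), zero_mul]
    exact zero_mem _

lemma sum_sub_sq_mem_padicBall {r l : ℕ} (h : p % 4 = 3) (hl : p ^ (2 * r) = 4 * l + 1) :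
    ∑ k ∈ range (2 * l + 1), risingFactorial (1 / 2) k ^ 3 / (k.factorial : ℚ) ^ 3
        - (risingFactorial (1 / 2) l / l.factorial) ^ 2 ∈ padicBall p (2 * r + 2) := by
  set w := (risingFactorial (1 / 2) l / l.factorial) ^ 2 with hw
  have hsum : ∑ k ∈ range (2 * l + 1), risingFactorial (1 / 2) k ^ 3 / (k.factorial : ℚ) ^ 3 - w
      = ∑ s ∈ range (2 * l), (truncatedHypergeometric (2 * l + 1) s * lagrangeWeight (2 * l) s
        - w * lagrangeWeight (2 * l) s) := by
    have hone := sum_lagrangeWeight (2 * l)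
    rw [sum_range_succ] at hone
    rw [← truncatedHypergeometric_neg_half, truncatedHypergeometric_neg_half_eq_sum,
      sum_range_succ, truncatedHypergeometric_even (by lia), ← hw, sum_sub_distrib, ← mul_sum]
    linear_combination w * hone
  rw [hsum]
  refine sum_mem fun s hs ↦ ?_
  rw [mem_range] at hs
  have hweight := lagrangeWeight_mem_padicBall (p := p) (m := 2 * r) (by lia) (by lia) hs
  have hval := padicValNat_lt_of_lt_pow (p := p) (m := 2 * r) (by lia : 2 * s + 1 ≠ 0) (by lia)
  exact sub_mem (truncatedHypergeometric_mul_lagrangeWeight_mem_padicBall h hl hs)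
    (mul_mem_padicBall (risingFactorial_half_div_factorial_sq_mem_padicBall h hl)
      (padicBall_antitone (by lia) hweight))

end Congruence

section Product

lemma mul_prod_range_div_eq (l : ℕ) :
    (4 * l + 1 : ℚ) * ∏ k ∈ range l, (4 * (k : ℚ) + 3) / (4 * k + 5)
      = ∏ k ∈ range l, (4 * (k : ℚ) + 3) / (4 * k + 1) := by
  induction l with
  | zero => simp
  | succ l ih =>
    rw [prod_range_succ, prod_range_succ, ← ih]
    push_cast
    field_simp
    ring

lemma mul_prod_Icc_eq (l : ℕ) :
    (4 * l + 1 : ℚ) * ∏ k ∈ Icc 1 (2 * l), (4 * (k : ℚ) - 1) / (4 * k + 1)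
      = ∏ i ∈ range l,
        ((4 * (l : ℚ) + 1) ^ 2 - (4 * i + 2) ^ 2) / ((4 * l + 1) ^ 2 - (4 * i + 4) ^ 2) := by
  have hshift : ∏ k ∈ Icc 1 (2 * l), (4 * (k : ℚ) - 1) / (4 * k + 1)
      = ∏ k ∈ range (l + l), (4 * (k : ℚ) + 3) / (4 * k + 5) := by
    rw [← Ico_add_one_right_eq_Icc, prod_Ico_eq_prod_range, two_mul, Nat.add_sub_cancel]
    refine prod_congr rfl fun k _ ↦ ?_
    push_cast
    congr 1 <;> ring
  rw [hshift, prod_range_add, ← mul_assoc, mul_prod_range_div_eq, ← prod_range_reflect,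
    ← prod_mul_distrib]
  refine prod_congr rfl fun i hi ↦ ?_
  obtain ⟨d, rfl⟩ := Nat.exists_eq_add_of_lt (mem_range.mp hi)
  rw [show i + d + 1 - 1 - i = d by lia, div_mul_div_comm]
  push_cast
  congr 1 <;> ring

lemma mul_prod_Icc_eq_sq_mul_prod (l : ℕ) :
    (4 * l + 1 : ℚ) * ∏ k ∈ Icc 1 (2 * l), (4 * (k : ℚ) - 1) / (4 * k + 1)
      = (risingFactorial (1 / 2) l / l.factorial) ^ 2
        * ∏ i ∈ range l, (1 - ((4 * l + 1) / (4 * i + 2 : ℕ) : ℚ) ^ 2)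
          / (1 - ((4 * l + 1) / (4 * i + 4 : ℕ) : ℚ) ^ 2) := by
  rw [mul_prod_Icc_eq, risingFactorial_half_div_factorial_eq_prod, ← prod_pow, ← prod_mul_distrib]
  refine prod_congr rfl fun i _ ↦ ?_
  have hquot (a q : ℚ) (ha : a ≠ 0) : q ^ 2 - a ^ 2 = -a ^ 2 * (1 - (q / a) ^ 2) := by
    field_simp
    ring
  rw [hquot (4 * i + 2) _ (by positivity), hquot (4 * i + 4) _ (by positivity), mul_div_mul_comm,
    neg_div_neg_eq, ← div_pow]
  push_cast
  rfl

lemma one_sub_div_sq_sub_one_mem_padicBall {p m a : ℕ} [Fact p.Prime] (ha : a < p ^ m) :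
    1 - ((p : ℚ) ^ m / a) ^ 2 - 1 ∈ padicBall p 2 := by
  have hdiv := prime_pow_div_mem_padicBall ha
  have hsq := neg_mem (mul_mem_padicBall hdiv hdiv)
  rwa [← sq, ← sub_sub_cancel_left 1, one_add_one_eq_two] at hsq

lemma mul_prod_sub_sq_mem_padicBall {p r l : ℕ} [Fact p.Prime] (h : p % 4 = 3)
    (hl : p ^ (2 * r) = 4 * l + 1) :
    (p : ℚ) ^ (2 * r) * ∏ k ∈ Icc 1 (2 * l), (4 * (k : ℚ) - 1) / (4 * k + 1)
      - (risingFactorial (1 / 2) l / l.factorial) ^ 2 ∈ padicBall p (2 * r + 2) := by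
  have hlQ : (p : ℚ) ^ (2 * r) = 4 * l + 1 := by exact_mod_cast hl
  rw [hlQ, mul_prod_Icc_eq_sq_mul_prod, ← mul_sub_one, ← hlQ]
  refine mul_mem_padicBall (risingFactorial_half_div_factorial_sq_mem_padicBall h hl)
    (prod_sub_one_mem_padicBall zero_le_two fun i hi ↦ ?_)
  rw [mem_range] at hi
  exact div_sub_one_mem_padicBall two_pos (one_sub_div_sq_sub_one_mem_padicBall (by lia))
    (one_sub_div_sq_sub_one_mem_padicBall (by lia))

end Product

/-- For a prime `p ≡ 3 (mod 4)` and `r ≥ 1`,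
`∑_{k=0}^{(p^{2r}-1)/2} (1/2)_k^3/k!^3 ≡ p^{2r} ∏_{k=1}^{(p^{2r}-1)/2} (4k-1)/(4k+1)
(mod p^{2r+2})`. -/
theorem stmt14 (p r : ℕ) (hp : p.Prime) (h : p % 4 = 3) (hr : 1 ≤ r) :
    ∃ a b : ℤ, ¬ ((p : ℤ) ∣ b) ∧
      ((∑ k ∈ Finset.range ((p ^ (2 * r) - 1) / 2 + 1),
          risingFactorial (1/2) k ^ 3 / (k.factorial : ℚ) ^ 3)
        - (p : ℚ) ^ (2 * r) * ∏ k ∈ Finset.Icc 1 ((p ^ (2 * r) - 1) / 2),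
            ((4 * (k : ℚ) - 1) / (4 * (k : ℚ) + 1))) * (b : ℚ)
      = (p : ℚ) ^ (2 * r + 2) * (a : ℚ) := by
  have : Fact p.Prime := ⟨hp⟩
  have hmod : p ^ (2 * r) % 4 = 1 := by simp [pow_mul, Nat.pow_mod, h]
  obtain ⟨l, hl⟩ : ∃ l, p ^ (2 * r) = 4 * l + 1 := ⟨p ^ (2 * r) / 4, by lia⟩
  rw [show (p ^ (2 * r) - 1) / 2 = 2 * l by lia]
  apply exists_mul_eq_of_mem_padicBall
  simpa only [sub_sub_sub_cancel_right, Nat.cast_add, Nat.cast_mul, Nat.cast_ofNat] using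
    sub_mem (sum_sub_sq_mem_padicBall h hl) (mul_prod_sub_sq_mem_padicBall h hl)
end
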